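/- arXiv:1708.08714 — 8 statements merged into one kernel-verified Lean document; each statement's English description precedes it below -/
import Mathlib

section
/- Let K be a finite geometric simplicial complex in ℝ^d whose space Q = |K| is convex with nonempty interior and which is pure d-dimensional, let V be its vertex set, ω : V → ℝ, and let g = g_{K,ω} be the piecewise-linear interpolant. Then g is concave on Q if and only if for every pair of faces σ = {a₁,…,a_{d+1}} and σ' = {a₂,…,a_{d+2}} of K, each with d+1 elements and sharing the d elements a₂,…,a_{d+1}, the affine function h : ℝ^d → ℝ that agrees with g on convexHull ℝ σ satisfies h(a_{d+2}) ≥ ω(a_{d+2}). -/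
/-!
If `h` is affine and agrees with `g` on a full-dimensional simplex `σ`, concavity of `g` along a
segment from an interior point of `σ` to `b` gives `g b ≤ h b`; this is one direction.

For the converse it is enough to show `g ≤ h` on all of `|K|` for every such `σ` and `h`
(`interpolant_le_affine`): by purity each point of `|K|` lies in such a `σ`, so `g` is then the
pointwise minimum of these `h`. Fix `y ∈ |K|` and choose `x` in the interior of `conv σ` outside the
affine spans of `y` together with a face of at most `d - 1` vertices; these are finitely
many null sets. The half-open segment from `x` to `y` then misses every face of codimension at
least two. At a point `z` of the open segment, any two small opposite displacements of `z` lie in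
full-dimensional simplices containing `z`; these share at least `d` vertices, so they are equal or
adjacent, and the local hypothesis gives `g (z - w) + g (z + w) ≤ 2 g z` (`local_midpoint`). Hence
`g - h` restricted to the segment is continuous, locally midpoint concave, and zero near `x`, so
it is nonpositive at `y` (`nonpos_of_local_midpoint`).
-/

open Set Filter Topology Geometry

/-- A continuous function on `[0, 1]` that vanishes at `0`, is nonpositive just after `0`, and is
locally midpoint concave on `(0, 1)` is nonpositive at `1`. Otherwise subtracting the chord gives
a function with a negative minimum, and midpoint concavity fails at the last minimizer. -/
lemma nonpos_of_local_midpoint (f : ℝ → ℝ) (hf : ContinuousOn f (Icc 0 1)) (h0 : f 0 = 0)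
    (hnear : ∀ᶠ t in 𝓝[>] (0 : ℝ), f t ≤ 0)
    (hmid : ∀ t ∈ Ioo (0 : ℝ) 1, ∀ᶠ δ in 𝓝[>] (0 : ℝ), f (t - δ) + f (t + δ) ≤ 2 * f t) :
    f 1 ≤ 0 := by
  by_contra! h1
  set c : ℝ → ℝ := fun t => f t - t * f 1 with hc
  have hcc : ContinuousOn c (Icc 0 1) := hf.sub (by fun_prop)
  obtain ⟨t₀, ht₀, ht₀'⟩ := (hnear.and (Ioo_mem_nhdsGT (zero_lt_one' ℝ))).exists
  have hct₀ : c t₀ < 0 := by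
    have := mul_pos ht₀'.1 h1
    simp only [hc]; linarith
  obtain ⟨m, hm, hmin⟩ := isCompact_Icc.exists_isMinOn (nonempty_Icc.2 zero_le_one) hcc
  have hM : IsCompact (Icc (0 : ℝ) 1 ∩ c ⁻¹' {c m}) :=
    isCompact_Icc.of_isClosed_subset
      (hcc.preimage_isClosed_of_isClosed isClosed_Icc isClosed_singleton) inter_subset_left
  obtain ⟨s, ⟨hs, hsm⟩, hsmax⟩ := hM.exists_isGreatest ⟨m, hm, rfl⟩
  have hsm : c s = c m := hsm
  have hcs : c s < 0 := by
    rw [hsm]; exact lt_of_le_of_lt (hmin (Ioo_subset_Icc_self ht₀')) hct₀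
  have hs0 : 0 < s := by
    rcases hs.1.lt_or_eq with h | h
    · exact h
    · rw [← h] at hcs; simp [hc, h0] at hcs
  have hs1 : s < 1 := by
    rcases hs.2.lt_or_eq with h | h
    · exact h
    · rw [h] at hcs; simp [hc] at hcs
  obtain ⟨δ, hδ, hδ'⟩ := ((hmid s ⟨hs0, hs1⟩).and
    (Ioo_mem_nhdsGT (lt_min hs0 (sub_pos.2 hs1)))).exists
  have h2 := lt_min_iff.1 hδ'.2
  have hδ0 : 0 < δ := hδ'.1
  have hl : c m ≤ c (s - δ) := hmin ⟨by linarith, by linarith⟩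
  have hr : c m ≤ c (s + δ) := hmin ⟨by linarith, by linarith⟩
  have hr' : c (s + δ) ≠ c m := fun h => by
    have : s + δ ≤ s := hsmax ⟨⟨by linarith, by linarith⟩, h⟩
    linarith
  have hr'' := lt_of_le_of_ne hr hr'.symm
  simp only [hc] at hl hr'' hsm
  nlinarith

/-- An affine inequality on the vertices extends to the convex hull. -/
lemma affine_le_on_convexHull {E : Type*} [AddCommGroup E] [Module ℝ E] {s : Set E}
    (h₁ h₂ : E →ᵃ[ℝ] ℝ) (hle : ∀ v ∈ s, h₁ v ≤ h₂ v) {x : E} (hx : x ∈ convexHull ℝ s) :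
    h₁ x ≤ h₂ x := by
  have hconv : Convex ℝ {x | h₁ x ≤ h₂ x} := by
    have h : {x | h₁ x ≤ h₂ x} = (h₂ - h₁) ⁻¹' Ici 0 := by ext; simp
    rw [h]
    exact (convex_Ici 0).affine_preimage _
  exact convexHull_min hle hconv hx

lemma interior_simplex_nonempty {d : ℕ} {K : SimplicialComplex ℝ (Fin d → ℝ)}
    {σ : Finset (Fin d → ℝ)} (hσ : σ ∈ K.faces) (hcard : σ.card = d + 1) :
    (interior (convexHull ℝ (σ : Set (Fin d → ℝ)))).Nonempty := by
  rw [interior_convexHull_nonempty_iff_affineSpan_eq_top]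
  have := (K.indep hσ).affineSpan_eq_top_iff_card_eq_finrank_add_one.2 (by simp [hcard])
  simpa using this

lemma exists_generic_point {d : ℕ} (S : Set (Finset (Fin d → ℝ))) (hS : S.Finite)
    (hcard : ∀ F ∈ S, F.card < d) (y : Fin d → ℝ) {U : Set (Fin d → ℝ)} (hU : IsOpen U)
    (hne : U.Nonempty) :
    ∃ x ∈ U, ∀ F ∈ S, x ∉ affineSpan ℝ (insert y (F : Set (Fin d → ℝ))) := by
  classical
  have hnull : MeasureTheory.volume
      (⋃ F ∈ S, (affineSpan ℝ (insert y (F : Set (Fin d → ℝ))) : Set (Fin d → ℝ))) = 0 := by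
    rw [MeasureTheory.measure_biUnion_null_iff hS.countable]
    intro F hF
    apply MeasureTheory.Measure.addHaar_affineSubspace
    intro htop
    have h1 : Module.finrank ℝ (vectorSpan ℝ (insert y (F : Set (Fin d → ℝ)))) = d := by
      rw [← direction_affineSpan, htop, AffineSubspace.direction_top, finrank_top]; simp
    have h2 : 0 < (insert y F).card := Finset.card_pos.2 ⟨y, by simp⟩
    have h3 := finrank_vectorSpan_image_finset_le ℝ (id : (Fin d → ℝ) → _) (insert y F)
      (n := (insert y F).card - 1) (by omega)
    rw [Finset.image_id, Finset.coe_insert, h1] at h3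
    have := Finset.card_insert_le y F
    have := hcard F hF
    omega
  have hpos := hU.measure_pos MeasureTheory.volume hne
  by_contra! hcon
  refine hpos.ne' (MeasureTheory.measure_mono_null (fun x hx => ?_) hnull)
  obtain ⟨F, hF, hxF⟩ := hcon x hx
  exact mem_biUnion hF hxF

lemma interpolant_continuousOn {d : ℕ} {K : SimplicialComplex ℝ (Fin d → ℝ)}
    (hfin : K.faces.Finite) {g : (Fin d → ℝ) → ℝ}
    (hg : ∀ σ ∈ K.faces, ∃ h : (Fin d → ℝ) →ᵃ[ℝ] ℝ,
      ∀ x ∈ convexHull ℝ (σ : Set (Fin d → ℝ)), g x = h x) :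
    ContinuousOn g K.space := by
  have : Finite K.faces := hfin
  rw [SimplicialComplex.space, biUnion_eq_iUnion]
  refine LocallyFinite.continuousOn_iUnion (locallyFinite_of_finite _) (fun σ => ?_) (fun σ => ?_)
  · exact σ.1.finite_toSet.isClosed_convexHull ℝ
  · obtain ⟨h, hh⟩ := hg σ σ.2
    exact h.continuous_of_finiteDimensional.continuousOn.congr hh

/-- Near an interior point `z` of the space, each point lies in a full-dimensional simplex that
contains `z`. -/
lemma eventually_mem_simplex {d : ℕ} {K : SimplicialComplex ℝ (Fin d → ℝ)}
    (hfin : K.faces.Finite)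
    (hpure : ∀ σ ∈ K.faces, ∃ τ ∈ K.faces, σ ⊆ τ ∧ τ.card = d + 1)
    {z : Fin d → ℝ} (hz : z ∈ interior K.space) :
    ∀ᶠ p in 𝓝 z, ∃ τ ∈ K.faces, τ.card = d + 1 ∧
      z ∈ convexHull ℝ (τ : Set (Fin d → ℝ)) ∧ p ∈ convexHull ℝ (τ : Set (Fin d → ℝ)) := by
  have h1 : ∀ᶠ p in 𝓝 z, ∀ τ ∈ K.faces, z ∉ convexHull ℝ (τ : Set (Fin d → ℝ)) →
      p ∉ convexHull ℝ (τ : Set (Fin d → ℝ)) := by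
    rw [eventually_all_finite hfin]
    intro τ _
    by_cases hzτ : z ∈ convexHull ℝ (τ : Set (Fin d → ℝ))
    · simp [hzτ]
    · filter_upwards [(τ.finite_toSet.isClosed_convexHull ℝ).isOpen_compl.mem_nhds hzτ] with p hp _
      exact hp
  filter_upwards [h1, mem_interior_iff_mem_nhds.1 hz] with p hp hpK
  obtain ⟨σ, hσ, hpσ⟩ := SimplicialComplex.mem_space_iff.1 hpK
  obtain ⟨τ, hτ, hστ, hcard⟩ := hpure σ hσ
  have hpτ := convexHull_mono (Finset.coe_subset.2 hστ) hpσ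
  exact ⟨τ, hτ, hcard, by_contra fun h => hp τ hτ h hpτ, hpτ⟩

lemma local_midpoint {d : ℕ} {K : SimplicialComplex ℝ (Fin d → ℝ)}
    (hfin : K.faces.Finite)
    (hpure : ∀ σ ∈ K.faces, ∃ τ ∈ K.faces, σ ⊆ τ ∧ τ.card = d + 1)
    {ω g : (Fin d → ℝ) → ℝ}
    (hg : ∀ σ ∈ K.faces, ∃ h : (Fin d → ℝ) →ᵃ[ℝ] ℝ,
      ∀ x ∈ convexHull ℝ (σ : Set (Fin d → ℝ)), g x = h x)
    (hgω : ∀ v ∈ K.vertices, g v = ω v)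
    (hloc : ∀ σ ∈ K.faces, ∀ σ' ∈ K.faces, σ.card = d + 1 → σ'.card = d + 1 →
        (σ ∩ σ').card = d →
        ∀ h : (Fin d → ℝ) →ᵃ[ℝ] ℝ,
          (∀ x ∈ convexHull ℝ (σ : Set (Fin d → ℝ)), g x = h x) →
          ∀ b ∈ σ', b ∉ σ → ω b ≤ h b)
    {z : Fin d → ℝ} (hz : z ∈ interior K.space)
    (hgen : ∀ F ∈ K.faces, F.card < d → z ∉ convexHull ℝ (F : Set (Fin d → ℝ))) :
    ∀ᶠ w in 𝓝 (0 : Fin d → ℝ), g (z - w) + g (z + w) ≤ 2 * g z := by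
  have hev := eventually_mem_simplex hfin hpure hz
  have hadd : Tendsto (fun w : Fin d → ℝ => z + w) (𝓝 0) (𝓝 z) := by
    simpa using (continuous_const_add z).tendsto 0
  have hsub : Tendsto (fun w : Fin d → ℝ => z - w) (𝓝 0) (𝓝 z) := by
    simpa using (continuous_sub_left z).tendsto 0
  filter_upwards [hadd.eventually hev, hsub.eventually hev] with w hw hw'
  obtain ⟨σ, hσ, hσc, hzσ, hwσ⟩ := hw
  obtain ⟨τ, hτ, hτc, hzτ, hwτ⟩ := hw'
  obtain ⟨h, hh⟩ := hg σ hσ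
  obtain ⟨k, hk⟩ := hg τ hτ
  have hmeet : z ∈ convexHull ℝ ((σ ∩ τ : Finset (Fin d → ℝ)) : Set (Fin d → ℝ)) := by
    rw [Finset.coe_inter]; exact K.inter_subset_convexHull hσ hτ ⟨hzσ, hzτ⟩
  have hne : (σ ∩ τ).Nonempty := by
    rw [← Finset.coe_nonempty, ← convexHull_nonempty_iff (𝕜 := ℝ)]; exact ⟨z, hmeet⟩
  have hcard : d ≤ (σ ∩ τ).card := by
    by_contra! hlt
    exact hgen _ (K.down_closed hσ Finset.inter_subset_left hne) hlt hmeet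
  have hle : ∀ v ∈ (τ : Set (Fin d → ℝ)), k v ≤ h v := by
    intro v hv
    have hkv := hk v (subset_convexHull ℝ _ hv)
    by_cases hvσ : v ∈ σ
    · rw [← hkv, hh v (subset_convexHull ℝ _ hvσ)]
    · have hvK : v ∈ K.vertices :=
        K.down_closed hτ (Finset.singleton_subset_iff.2 hv) (Finset.singleton_nonempty v)
      have hlt : (σ ∩ τ).card < τ.card := Finset.card_lt_card
        ⟨Finset.inter_subset_right, fun hsub => hvσ (Finset.mem_inter.1 (hsub hv)).1⟩
      rw [← hkv, hgω v hvK]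
      exact hloc σ hσ τ hτ hσc hτc (by omega) h hh v hv hvσ
  have h1 := affine_le_on_convexHull k h hle hwτ
  have hmid : h (z - w) + h (z + w) = 2 * h z := by
    rw [h.decomp]
    simp only [Pi.add_apply, map_sub, map_add]
    ring
  rw [hk _ hwτ, hh _ hwσ, hh _ hzσ]
  linarith

lemma interpolant_le_affine {d : ℕ} {K : SimplicialComplex ℝ (Fin d → ℝ)}
    (hfin : K.faces.Finite) (hconv : Convex ℝ K.space)
    (hpure : ∀ σ ∈ K.faces, ∃ τ ∈ K.faces, σ ⊆ τ ∧ τ.card = d + 1)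
    {ω g : (Fin d → ℝ) → ℝ}
    (hg : ∀ σ ∈ K.faces, ∃ h : (Fin d → ℝ) →ᵃ[ℝ] ℝ,
      ∀ x ∈ convexHull ℝ (σ : Set (Fin d → ℝ)), g x = h x)
    (hgω : ∀ v ∈ K.vertices, g v = ω v)
    (hloc : ∀ σ ∈ K.faces, ∀ σ' ∈ K.faces, σ.card = d + 1 → σ'.card = d + 1 →
        (σ ∩ σ').card = d →
        ∀ h : (Fin d → ℝ) →ᵃ[ℝ] ℝ,
          (∀ x ∈ convexHull ℝ (σ : Set (Fin d → ℝ)), g x = h x) →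
          ∀ b ∈ σ', b ∉ σ → ω b ≤ h b)
    {σ : Finset (Fin d → ℝ)} (hσ : σ ∈ K.faces) (hσc : σ.card = d + 1)
    (h : (Fin d → ℝ) →ᵃ[ℝ] ℝ)
    (hh : ∀ x ∈ convexHull ℝ (σ : Set (Fin d → ℝ)), g x = h x)
    {y : Fin d → ℝ} (hy : y ∈ K.space) : g y ≤ h y := by
  obtain ⟨x, hx, hxgen⟩ := exists_generic_point {F | F ∈ K.faces ∧ F.card < d}
    (hfin.subset fun _ h => h.1) (fun _ h => h.2) y isOpen_interior
    (interior_simplex_nonempty hσ hσc)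
  have hxσ := interior_subset hx
  have hxK : x ∈ interior K.space :=
    interior_mono (SimplicialComplex.convexHull_subset_space hσ) hx
  set ℓ : ℝ →ᵃ[ℝ] (Fin d → ℝ) := AffineMap.lineMap x y with hℓ
  have hℓc : Continuous ℓ := AffineMap.lineMap_continuous
  have hhc : Continuous h := h.continuous_of_finiteDimensional
  have key := nonpos_of_local_midpoint (fun t => g (ℓ t) - h (ℓ t)) ?_ ?_ ?_ ?_
  · simpa [hℓ] using key
  · refine ((interpolant_continuousOn hfin hg).comp hℓc.continuousOn fun t ht => ?_).sub
      (hhc.comp hℓc).continuousOn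
    exact hconv.segment_subset (interior_subset hxK) hy
      (segment_eq_image_lineMap ℝ x y ▸ mem_image_of_mem _ ht)
  · simp [hℓ, hh x hxσ]
  · have h1 : ∀ᶠ t in 𝓝 (0 : ℝ), ℓ t ∈ interior (convexHull ℝ (σ : Set (Fin d → ℝ))) :=
      hℓc.continuousAt.eventually_mem (isOpen_interior.mem_nhds (by simpa [hℓ] using hx))
    filter_upwards [nhdsWithin_le_nhds h1] with t ht
    simp [hh _ (interior_subset ht)]
  · intro t ht
    have hzK : ℓ t ∈ interior K.space :=
      hconv.openSegment_interior_self_subset_interior hxK hy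
        (openSegment_eq_image_lineMap ℝ x y ▸ mem_image_of_mem _ ht)
    have hzgen : ∀ F ∈ K.faces, F.card < d → ℓ t ∉ convexHull ℝ (F : Set (Fin d → ℝ)) := by
      intro F hF hFc hzF
      refine hxgen F ⟨hF, hFc⟩ ?_
      have hyA : y ∈ affineSpan ℝ (insert y (F : Set (Fin d → ℝ))) :=
        subset_affineSpan ℝ _ (mem_insert _ _)
      have hzA : ℓ t ∈ affineSpan ℝ (insert y (F : Set (Fin d → ℝ))) :=
        affineSpan_mono ℝ (subset_insert _ _) (convexHull_subset_affineSpan _ hzF)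
      -- `x` lies on the line through `y` and `ℓ t`, as `t ≠ 1`.
      have hxe : x = AffineMap.lineMap y (ℓ t) ((1 - t)⁻¹) := by
        have h1t : (1 - t) ≠ 0 := (sub_pos.2 ht.2).ne'
        ext i
        simp only [hℓ, AffineMap.lineMap_apply, vsub_eq_sub, vadd_eq_add, Pi.add_apply,
          Pi.smul_apply, Pi.sub_apply, smul_eq_mul]
        field_simp
        ring
      rw [hxe]
      exact AffineMap.lineMap_mem _ hyA hzA
    have hw : Tendsto (fun δ : ℝ => δ • (y - x)) (𝓝[>] 0) (𝓝 0) := by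
      have : Tendsto (fun δ : ℝ => δ • (y - x)) (𝓝 0) (𝓝 ((0 : ℝ) • (y - x))) :=
        (continuous_id.smul continuous_const).tendsto 0
      rw [zero_smul] at this
      exact this.mono_left nhdsWithin_le_nhds
    filter_upwards [hw.eventually (local_midpoint hfin hpure hg hgω hloc hzK hzgen)] with δ hδ
    have e1 : ℓ (t - δ) = ℓ t - δ • (y - x) := by
      simp only [hℓ, AffineMap.lineMap_apply, vsub_eq_sub, vadd_eq_add]; module
    have e2 : ℓ (t + δ) = ℓ t + δ • (y - x) := by
      simp only [hℓ, AffineMap.lineMap_apply, vsub_eq_sub, vadd_eq_add]; module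
    have hmid : h (ℓ (t - δ)) + h (ℓ (t + δ)) = 2 * h (ℓ t) := by
      rw [e1, e2, h.decomp]
      simp only [Pi.add_apply, map_sub, map_add]
      ring
    rw [← e1, ← e2] at hδ
    linarith

/-- Let `K` be a finite geometric simplicial complex in `ℝ^d` whose space
`Q = |K|` is convex with nonempty interior, pure `d`-dimensional, `ω` a weight on the
vertices, and `g` the piecewise-linear interpolant of `ω` (characterized by the two
hypotheses `hg`, `hgω`). Then `g` is concave on `Q` iff for every pair of `(d+1)`-element
faces `σ, σ'` sharing `d` elements, the affine function `h` agreeing with `g` on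
`convexHull ℝ σ` satisfies `h b ≥ ω b` for the remaining vertex `b` of `σ'`. -/
theorem stmt4 (d : ℕ) (K : Geometry.SimplicialComplex ℝ (Fin d → ℝ))
    (hfin : K.faces.Finite)
    (hconv : Convex ℝ K.space) (hint : (interior K.space).Nonempty)
    (hpure : ∀ σ ∈ K.faces, ∃ τ ∈ K.faces, σ ⊆ τ ∧ τ.card = d + 1)
    (ω : (Fin d → ℝ) → ℝ) (g : (Fin d → ℝ) → ℝ)
    (hg : ∀ σ ∈ K.faces, ∃ h : (Fin d → ℝ) →ᵃ[ℝ] ℝ,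
      ∀ x ∈ convexHull ℝ (σ : Set (Fin d → ℝ)), g x = h x)
    (hgω : ∀ v ∈ K.vertices, g v = ω v) :
    ConcaveOn ℝ K.space g ↔
      ∀ σ ∈ K.faces, ∀ σ' ∈ K.faces, σ.card = d + 1 → σ'.card = d + 1 →
        (σ ∩ σ').card = d →
        ∀ h : (Fin d → ℝ) →ᵃ[ℝ] ℝ,
          (∀ x ∈ convexHull ℝ (σ : Set (Fin d → ℝ)), g x = h x) →
          ∀ b ∈ σ', b ∉ σ → ω b ≤ h b := by
  constructor
  · intro hconc σ hσ σ' hσ' hσc _ _ h hh b hb _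
    have hbK : b ∈ K.vertices :=
      K.down_closed hσ' (Finset.singleton_subset_iff.2 hb) (Finset.singleton_nonempty b)
    obtain ⟨x, hx⟩ := interior_simplex_nonempty hσ hσc
    have hev : ∀ᶠ t in 𝓝 (0 : ℝ), AffineMap.lineMap x b t ∈
        interior (convexHull ℝ (σ : Set (Fin d → ℝ))) :=
      (AffineMap.lineMap_continuous (R := ℝ) (p := x) (q := b)).continuousAt.eventually_mem
        (isOpen_interior.mem_nhds (by simpa using hx))
    obtain ⟨t, ht, ht0, ht1⟩ := ((hev.filter_mono (nhdsWithin_le_nhds (s := Ioi 0))).and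
      (Ioo_mem_nhdsGT (zero_lt_one' ℝ))).exists
    have hc := hconc.2 (SimplicialComplex.convexHull_subset_space hσ (interior_subset hx))
      (SimplicialComplex.subset_space hσ' hb) (sub_nonneg.2 ht1.le) ht0.le (by ring)
    have hht := h.apply_lineMap x b t
    rw [← AffineMap.lineMap_apply_module x b t, hh _ (interior_subset ht), hht,
      AffineMap.lineMap_apply_module, hh _ (interior_subset hx), hgω b hbK] at hc
    simp only [smul_eq_mul] at hc
    exact le_of_mul_le_mul_left (by linarith) ht0
  · intro hloc
    refine ⟨hconv, fun x hx y hy a b ha hb hab => ?_⟩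
    obtain ⟨ρ, hρ, hzρ⟩ := SimplicialComplex.mem_space_iff.1 (hconv hx hy ha hb hab)
    obtain ⟨σ, hσ, hρσ, hσc⟩ := hpure ρ hρ
    have hzσ := convexHull_mono (Finset.coe_subset.2 hρσ) hzρ
    obtain ⟨h, hh⟩ := hg σ hσ
    have hx' := interpolant_le_affine hfin hconv hpure hg hgω hloc hσ hσc h hh hx
    have hy' := interpolant_le_affine hfin hconv hpure hg hgω hloc hσ hσc h hh hy
    rw [hh _ hzσ, Convex.combo_affine_apply hab]
    simp only [smul_eq_mul]
    gcongr
end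

section
/- Let K be a finite geometric simplicial complex in ℝ^d whose space Q = |K| is convex with nonempty interior and which is pure d-dimensional, with vertex set V. Then the secondary cone C(K) = {ω ∈ ℝ^V : g_{K,ω} is concave on Q} equals the set of all ω ∈ ℝ^V satisfying, for every ordered pair of faces {a₁,…,a_{d+1}} and {a₂,…,a_{d+2}} of K with d+1 elements each, sharing the d elements a₂,…,a_{d+1}, and such that det of the (d+1)×(d+1) matrix with columns (a_i,1) for i = 1,…,d+1 is positive, the linear inequality det[(a_i, 1, ω(a_i))_{i=1,…,d+2}] ≤ 0 (a (d+2)×(d+2) determinant). In particular, C(K) is a closed convex cone that is the intersection of finitely many closed linear half-spaces of ℝ^V. -/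
/-!
The proof compares both descriptions of the cone with a third, local one: for adjacent `d`-simplices
`σ`, `τ` of `K`, the affine extension `h_σ` of the interpolant `g` from `σ` satisfies `g v ≤ h_σ v`
at the apex `v` of `τ`.

*Determinants.* Row reduction gives
`det [(aᵢ, 1, ω aᵢ)] = det [(aᵢ, 1)]_{i ≤ d+1} · (ω a_{d+2} - h_σ a_{d+2})` (`det_liftMatrix`), so
the determinant inequalities are the local conditions on positively ordered pairs. The apices of
`σ` and `τ` lie on opposite sides of the common facet (`coord_apex_neg`), so exchanging them turns a
negatively ordered pair into a positively ordered one, and the local conditions at the two apices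
are equivalent (`local_of_detCond`).

*Concavity implies the local condition.* Apply concavity on a short segment through the barycentre
of the common facet, in the direction of `v` (`le_of_concaveOn`).

*The local condition implies concavity.* It suffices that `g ≤ h_σ` on `|K|` for every `d`-simplex
`σ`, since `g` is then a minimum of affine functions. This is `le_affine_of_local`: along a segment
from a generic point of `σ` to `x`, which crosses the simplices only through relative interiors of
facets, the values `h_τ x` for the simplices `τ` met cannot increase.

Finally the determinant is linear in `ω` and there are finitely many sequences `a`, which gives the
half-spaces, closedness, convexity and the cone property.
-/

namespace SecondaryCone

open Set

variable {d : ℕ}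

/-! ### Affine bases and barycentric coordinates -/

lemma affine_eq_sum {ι : Type*} [Fintype ι] (b : AffineBasis ι ℝ (Fin d → ℝ))
    (f : (Fin d → ℝ) →ᵃ[ℝ] ℝ) (x : Fin d → ℝ) :
    f x = ∑ i, b.coord i x * f (b i) := by
  conv_lhs => rw [← b.affineCombination_coord_eq_self x]
  rw [Finset.map_affineCombination _ _ _ (b.sum_coord_apply_eq_one x),
    Finset.affineCombination_eq_linear_combination _ _ _ (b.sum_coord_apply_eq_one x)]
  simp

lemma exists_affine_eq {ι : Type*} [Fintype ι] (b : AffineBasis ι ℝ (Fin d → ℝ)) (w : ι → ℝ) :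
    ∃ h : (Fin d → ℝ) →ᵃ[ℝ] ℝ, ∀ i, h (b i) = w i := by
  classical
  refine ⟨(Fintype.linearCombination ℝ w).toAffineMap.comp b.coords, fun i => ?_⟩
  simp [Fintype.linearCombination_apply, AffineBasis.coord_apply]

/-- If each barycentric coordinate of `m` is positive, or vanishes without decreasing towards `z`,
then a small step from `m` towards `z` stays in the simplex. -/
lemma exists_step {ι : Type*} [Fintype ι] (b : AffineBasis ι ℝ (Fin d → ℝ)) (m z : Fin d → ℝ)
    (h : ∀ i, 0 < b.coord i m ∨ (b.coord i m = 0 ∧ 0 ≤ b.coord i z)) :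
    ∃ ε : ℝ, 0 < ε ∧ ε < 1 ∧ AffineMap.lineMap m z ε ∈ convexHull ℝ (range b) := by
  have key : ∀ᶠ ε : ℝ in nhdsWithin 0 (Ioi 0), ∀ i,
      0 ≤ b.coord i (AffineMap.lineMap m z ε) := by
    rw [Filter.eventually_all]
    intro i
    have e : ∀ ε : ℝ, b.coord i (AffineMap.lineMap m z ε)
        = b.coord i m + ε * (b.coord i z - b.coord i m) := by
      intro ε
      rw [AffineMap.apply_lineMap, AffineMap.lineMap_apply]
      simp [add_comm]
    simp_rw [e]
    rcases h i with h | ⟨h, hz⟩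
    · have : Filter.Tendsto (fun ε : ℝ => b.coord i m + ε * (b.coord i z - b.coord i m))
          (nhdsWithin 0 (Ioi 0)) (nhds (b.coord i m + 0 * (b.coord i z - b.coord i m))) := by
        apply Filter.Tendsto.mono_left _ nhdsWithin_le_nhds
        apply Continuous.tendsto
        fun_prop
      filter_upwards [this.eventually (lt_mem_nhds (a := 0) (by simpa using h))] with ε hε
      exact hε.le
    · filter_upwards [self_mem_nhdsWithin] with ε hε
      rw [h]
      have : 0 ≤ ε * b.coord i z := mul_nonneg (le_of_lt hε) hz
      simpa using this
  obtain ⟨ε, h1, h2, h3⟩ := (key.and (Ioo_mem_nhdsGT (zero_lt_one : (0 : ℝ) < 1))).exists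
  refine ⟨ε, h2, h3, ?_⟩
  rw [b.convexHull_eq_nonneg_coord]
  exact h1

lemma mem_convexHull_of_coord {ι : Type*} [Fintype ι] (b : AffineBasis ι ℝ (Fin d → ℝ))
    {x : Fin d → ℝ} (hx : x ∈ convexHull ℝ (range b)) {S : Set (Fin d → ℝ)}
    (hS : ∀ i, b.coord i x ≠ 0 → b i ∈ S) : x ∈ convexHull ℝ S := by
  classical
  rw [b.convexHull_eq_nonneg_coord] at hx
  have h1 : ∑ i with b.coord i x ≠ 0, b.coord i x = 1 := by
    rw [Finset.sum_filter_ne_zero, b.sum_coord_apply_eq_one]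
  have h2 : ∑ i with b.coord i x ≠ 0, b.coord i x • b i = x := by
    conv_rhs => rw [← b.linear_combination_coord_eq_self x]
    apply Finset.sum_subset (Finset.filter_subset _ _)
    intro i _ hi
    simp only [Finset.mem_filter, Finset.mem_univ, true_and, not_not] at hi
    simp [hi]
  rw [← h2]
  refine (convex_convexHull ℝ S).sum_mem (fun i _ => hx i) h1 fun i hi => ?_
  exact subset_convexHull ℝ S (hS i (Finset.mem_filter.1 hi).2)

lemma exists_affineBasis_of_indep {p : Fin (d + 1) → Fin d → ℝ} (hp : AffineIndependent ℝ p) :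
    ∃ b : AffineBasis (Fin (d + 1)) ℝ (Fin d → ℝ), ⇑b = p := by
  refine ⟨⟨p, hp, ?_⟩, rfl⟩
  rw [hp.affineSpan_eq_top_iff_card_eq_finrank_add_one]
  simp

lemma exists_affineBasis_of_image_mem {K : Geometry.SimplicialComplex ℝ (Fin d → ℝ)}
    {p : Fin (d + 1) → Fin d → ℝ} (hinj : Function.Injective p)
    (hp : Finset.image p Finset.univ ∈ K.faces) :
    ∃ b : AffineBasis (Fin (d + 1)) ℝ (Fin d → ℝ), ⇑b = p := by
  apply exists_affineBasis_of_indep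
  have h := K.indep hp
  have hr : ((Finset.image p Finset.univ : Finset (Fin d → ℝ)) : Set (Fin d → ℝ)) = range p := by
    simp
  apply AffineIndependent.of_set_of_injective _ hinj
  rw [← hr]
  exact h

lemma exists_affineBasis_of_face {K : Geometry.SimplicialComplex ℝ (Fin d → ℝ)}
    {σ : Finset (Fin d → ℝ)} (hσ : σ ∈ K.faces) (hc : σ.card = d + 1) :
    ∃ b : AffineBasis (Fin (d + 1)) ℝ (Fin d → ℝ), range b = (σ : Set (Fin d → ℝ)) := by
  classical
  let e := σ.equivFinOfCardEq hc
  let p : Fin (d + 1) → Fin d → ℝ := fun i => (e.symm i : Fin d → ℝ)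
  have hr : Finset.image p Finset.univ = σ := by
    ext x
    simp only [Finset.mem_image, Finset.mem_univ, true_and, p]
    exact ⟨fun ⟨i, hi⟩ => hi ▸ (e.symm i).2, fun hx => ⟨e ⟨x, hx⟩, by simp⟩⟩
  obtain ⟨b, hb⟩ := exists_affineBasis_of_image_mem (K := K) (p := p)
    (Subtype.val_injective.comp e.symm.injective) (by rwa [hr])
  refine ⟨b, ?_⟩
  rw [hb, ← hr]
  simp

lemma affineSpan_ne_top_of_card_le {S : Finset (Fin d → ℝ)} (hS : S.card ≤ d) :
    affineSpan ℝ (S : Set (Fin d → ℝ)) ≠ ⊤ := by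
  classical
  intro h
  rcases S.eq_empty_or_nonempty with rfl | hne
  · simp at h
  · obtain ⟨n, hn⟩ := Nat.exists_eq_succ_of_ne_zero hne.card_pos.ne'
    have h1 := finrank_vectorSpan_image_finset_le ℝ (id : (Fin d → ℝ) → _) S hn
    have h2 : vectorSpan ℝ (S : Set (Fin d → ℝ)) = ⊤ := by
      rw [← direction_affineSpan, h, AffineSubspace.direction_top]
    rw [Finset.image_id, h2, finrank_top] at h1
    simp at h1
    omega

/-! ### Determinants -/

/-- The matrix with columns `(pⱼ, 1)`. -/
def homMatrix (p : Fin (d + 1) → Fin d → ℝ) : Matrix (Fin (d + 1)) (Fin (d + 1)) ℝ :=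
  Matrix.of fun i j => if h : (i : ℕ) < d then p j ⟨i, h⟩ else 1

/-- The matrix with columns `(aⱼ, 1, wⱼ)`. -/
def liftMatrix (a : Fin (d + 2) → Fin d → ℝ) (w : Fin (d + 2) → ℝ) :
    Matrix (Fin (d + 2)) (Fin (d + 2)) ℝ :=
  Matrix.of fun i j => if hi : (i : ℕ) < d then a j ⟨i, hi⟩ else if (i : ℕ) = d then 1 else w j

lemma affine_eq_coeff (h : (Fin d → ℝ) →ᵃ[ℝ] ℝ) :
    ∃ c : Fin d → ℝ, ∃ c0 : ℝ, ∀ x, h x = ∑ i, c i * x i + c0 := by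
  refine ⟨fun i => h.linear fun j => if i = j then 1 else 0, h 0, fun x => ?_⟩
  have h1 : h x = h.linear x + h 0 := by
    conv_lhs => rw [AffineMap.decomp h]
    rfl
  rw [h1, LinearMap.pi_apply_eq_sum_univ]
  simp [mul_comm]

/-- If `h` is the affine function with heights `w` on the first `d + 1` points, the lifted determinant
is the orientation determinant times the excess of `w` over `h` at the last point. -/
lemma det_liftMatrix (a : Fin (d + 2) → Fin d → ℝ) (w : Fin (d + 2) → ℝ)
    (h : (Fin d → ℝ) →ᵃ[ℝ] ℝ) (hw : ∀ i : Fin (d + 1), h (a i.castSucc) = w i.castSucc) :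
    (liftMatrix a w).det = (homMatrix fun i => a i.castSucc).det *
      (w (Fin.last _) - h (a (Fin.last _))) := by
  obtain ⟨c, c0, hc⟩ := affine_eq_coeff h
  -- subtract from the last row the combination of the other rows that evaluates `h`
  let k : Fin (d + 2) → ℝ := Fin.snoc (Fin.snoc (fun i => - c i) (- c0) : Fin (d + 1) → ℝ) 1
  have h1 := Matrix.det_updateRow_sum (liftMatrix a w) (Fin.last _) k
  have hk : k (Fin.last _) = 1 := by simp [k]
  rw [hk, one_smul] at h1
  have hrow : (∑ i, k i • (liftMatrix a w) i) = fun j => w j - h (a j) := by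
    ext j
    rw [Finset.sum_apply, Fin.sum_univ_castSucc, Fin.sum_univ_castSucc, hc]
    simp [k, liftMatrix]
    ring
  rw [hrow] at h1
  rw [← h1, Matrix.det_succ_row _ (Fin.last _), Fin.sum_univ_castSucc]
  have h0 : ∀ i : Fin (d + 1), w i.castSucc - h (a i.castSucc) = 0 := fun i => by rw [hw]; simp
  simp only [Matrix.updateRow_self, h0]
  have hs : ((liftMatrix a w).updateRow (Fin.last (d + 1)) fun j => w j - h (a j)).submatrix
      (Fin.last (d + 1)).succAbove (Fin.last (d + 1)).succAbove
      = homMatrix fun i => a i.castSucc := by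
    ext i j
    simp only [Matrix.submatrix_apply, Fin.succAbove_last]
    rw [Matrix.updateRow_ne (Fin.castSucc_lt_last i).ne]
    simp only [liftMatrix, homMatrix, Matrix.of_apply, Fin.val_castSucc]
    split_ifs with h1 h2
    · rfl
    · rfl
    · omega
  rw [hs]
  have : (-1 : ℝ) ^ ((Fin.last (d + 1) : ℕ) + (Fin.last (d + 1) : ℕ)) = 1 :=
    Even.neg_one_pow ⟨_, rfl⟩
  rw [this]
  simp [mul_comm]

/-- Replacing the first vertex of a simplex by `v` multiplies the orientation determinant by the
barycentric coordinate of `v` at that vertex. -/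
lemma det_homMatrix_cons (b : AffineBasis (Fin (d + 1)) ℝ (Fin d → ℝ)) (v : Fin d → ℝ)
    {p : Fin (d + 1) → Fin d → ℝ} (h0 : p 0 = v) (hp : ∀ i : Fin d, p i.succ = b i.succ) :
    (homMatrix p).det = b.coord 0 v * (homMatrix b).det := by
  have h := Matrix.det_updateCol_sum (homMatrix b) 0 (fun i => b.coord i v)
  rw [smul_eq_mul] at h
  rw [← h]
  congr 1
  ext i j
  refine Fin.cases ?_ (fun j => ?_) j
  · rw [Matrix.updateCol_self]
    simp only [homMatrix, Matrix.of_apply, h0]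
    split_ifs with hi
    · conv_lhs => rw [← b.linear_combination_coord_eq_self v]
      simp
    · simp [b.sum_coord_apply_eq_one]
  · rw [Matrix.updateCol_ne (Fin.succ_ne_zero j)]
    simp [homMatrix, hp]

lemma det_homMatrix_ne_zero (b : AffineBasis (Fin (d + 1)) ℝ (Fin d → ℝ)) :
    (homMatrix b).det ≠ 0 := by
  intro h
  obtain ⟨c, hc, hM⟩ := Matrix.exists_vecMul_eq_zero_iff.2 h
  -- `c` is the coefficient vector of an affine function vanishing on the basis
  have h1 : ∀ j, ∑ i : Fin d, c i.castSucc * b j i + c (Fin.last d) = 0 := by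
    intro j
    have := congrFun hM j
    rw [Matrix.vecMul, dotProduct, Fin.sum_univ_castSucc] at this
    simpa [homMatrix] using this
  have h2 : ∀ x : Fin d → ℝ, ∑ i : Fin d, c i.castSucc * x i + c (Fin.last d) = 0 := by
    intro x
    calc ∑ i : Fin d, c i.castSucc * x i + c (Fin.last d)
        = ∑ i : Fin d, c i.castSucc * (∑ j, b.coord j x • b j) i
          + (∑ j, b.coord j x) * c (Fin.last d) := by
          rw [b.linear_combination_coord_eq_self, b.sum_coord_apply_eq_one, one_mul]
      _ = ∑ j, b.coord j x * (∑ i : Fin d, c i.castSucc * b j i + c (Fin.last d)) := by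
          simp only [Finset.sum_apply, Pi.smul_apply, smul_eq_mul, mul_add,
            Finset.sum_add_distrib, Finset.sum_mul, Finset.mul_sum]
          rw [Finset.sum_comm]
          simp [mul_left_comm]
      _ = 0 := by simp [h1]
  have h3 : c (Fin.last d) = 0 := by simpa using h2 0
  apply hc
  ext i
  refine Fin.lastCases h3 (fun i => ?_) i
  simpa [h3, Pi.single_apply] using h2 (Pi.single i 1)


/-! ### Two simplices with a common facet -/

section Adjacent

variable {a : Fin (d + 2) → Fin d → ℝ} {b₁ b₂ : AffineBasis (Fin (d + 1)) ℝ (Fin d → ℝ)}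

/-- The barycentre of the common facet. -/
lemma exists_facet_point (hd : 0 < d) (h₁ : ∀ i, b₁ i = a i.castSucc)
    (h₂ : ∀ i, b₂ i = a i.succ) :
    ∃ m : Fin d → ℝ, b₁.coord 0 m = 0 ∧ (∀ i : Fin d, 0 < b₁.coord i.succ m) ∧
      m ∈ convexHull ℝ (range b₂) := by
  let w : Fin (d + 1) → ℝ := Fin.cons 0 fun _ => (d : ℝ)⁻¹
  have hd' : (0 : ℝ) < d := by exact_mod_cast hd
  have hw : ∑ i, w i = 1 := by
    rw [Fin.sum_univ_succ]
    simp [w, hd'.ne']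
  have hm : ∀ i, b₁.coord i (Finset.univ.affineCombination ℝ b₁ w) = w i :=
    fun i => b₁.coord_apply_combination_of_mem (Finset.mem_univ i) hw
  refine ⟨Finset.univ.affineCombination ℝ b₁ w, ?_, fun i => ?_, ?_⟩
  · rw [hm]
    simp [w]
  · rw [hm]
    simpa [w] using hd
  · rw [b₂.convexHull_eq_nonneg_coord]
    intro i
    rw [affine_eq_sum b₁ (b₂.coord i), Fin.sum_univ_succ]
    simp only [hm]
    have e : ∀ j : Fin d, b₁ j.succ = b₂ j.castSucc := fun j => by
      rw [h₁, h₂, Fin.succ_castSucc]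
    have : ∀ j : Fin d, 0 ≤ w j.succ * b₂.coord i (b₁ j.succ) := by
      intro j
      rw [e, b₂.coord_apply]
      apply mul_nonneg
      · simp [w]
      · split_ifs <;> simp
    have h0 : w 0 = 0 := by simp [w]
    rw [h0, zero_mul, zero_add]
    exact Finset.sum_nonneg fun j _ => this j

/-- The apices of two adjacent simplices of a complex lie strictly on opposite sides of the
hyperplane spanned by the common facet: otherwise the simplices would overlap near the
barycentre of the facet. -/
lemma coord_apex_neg (hd : 0 < d) (h₁ : ∀ i, b₁ i = a i.castSucc)
    (h₂ : ∀ i, b₂ i = a i.succ)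
    (hK : ∀ x ∈ convexHull ℝ (range b₁), x ∈ convexHull ℝ (range b₂) → b₁.coord 0 x = 0) :
    b₁.coord 0 (a (Fin.last _)) < 0 := by
  have hv : b₂ (Fin.last _) = a (Fin.last _) := by rw [h₂]; rfl
  have e : ∀ j : Fin d, b₂ j.castSucc = b₁ j.succ := fun j => by
    rw [h₁, h₂, Fin.succ_castSucc]
  have hform : ∀ x, b₁.coord 0 x
      = b₂.coord (Fin.last _) x * b₁.coord 0 (a (Fin.last _)) := by
    intro x
    rw [affine_eq_sum b₂ (b₁.coord 0) x, Fin.sum_univ_castSucc, hv]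
    simp [e, b₁.coord_apply, (Fin.succ_ne_zero _).symm]
  have hne : b₁.coord 0 (a (Fin.last _)) ≠ 0 := by
    intro h0
    have := hform (b₁ 0)
    rw [h0] at this
    simp at this
  by_contra hcon
  push Not at hcon
  obtain ⟨m, hm0, hm, hm2⟩ := exists_facet_point hd h₁ h₂
  obtain ⟨ε, hε, hε1, hq⟩ := exists_step b₁ m (a (Fin.last _)) (by
    intro i
    refine Fin.cases (Or.inr ⟨hm0, hcon⟩) (fun i => Or.inl (hm i)) i)
  have hq2 : AffineMap.lineMap m (a (Fin.last _)) ε ∈ convexHull ℝ (range b₂) := by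
    apply (convex_convexHull ℝ (range b₂)).lineMap_mem hm2 _ ⟨hε.le, hε1.le⟩
    exact subset_convexHull ℝ _ ⟨Fin.last _, hv⟩
  have := hK _ hq hq2
  rw [AffineMap.apply_lineMap, hm0, AffineMap.lineMap_apply] at this
  simp [hε.ne', hne] at this

/-- A concave function that is affine on a simplex lies below its affine extension at the apex of
an adjacent simplex. -/
lemma le_of_concaveOn (hd : 0 < d) (h₁ : ∀ i, b₁ i = a i.castSucc)
    (h₂ : ∀ i, b₂ i = a i.succ)
    (hK : ∀ x ∈ convexHull ℝ (range b₁), x ∈ convexHull ℝ (range b₂) → b₁.coord 0 x = 0)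
    {Q : Set (Fin d → ℝ)} {g : (Fin d → ℝ) → ℝ} (hg : ConcaveOn ℝ Q g)
    (hQ₁ : convexHull ℝ (range b₁) ⊆ Q) (hQ₂ : convexHull ℝ (range b₂) ⊆ Q)
    (h : (Fin d → ℝ) →ᵃ[ℝ] ℝ) (hh : ∀ x ∈ convexHull ℝ (range b₁), g x = h x) :
    g (a (Fin.last _)) ≤ h (a (Fin.last _)) := by
  have hneg := coord_apex_neg hd h₁ h₂ hK
  obtain ⟨m, hm0, hm, hm2⟩ := exists_facet_point hd h₁ h₂
  set v := a (Fin.last _) with hv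
  have hvQ : v ∈ Q := hQ₂ (subset_convexHull ℝ _ ⟨Fin.last _, by rw [h₂]; rfl⟩)
  -- step from `m` away from `v`, into the first simplex
  obtain ⟨ε, hε, hε1, hq⟩ := exists_step b₁ m (AffineMap.lineMap m v (-1 : ℝ)) (by
    intro i
    refine Fin.cases (Or.inr ⟨hm0, ?_⟩) (fun i => Or.inl (hm i)) i
    rw [AffineMap.apply_lineMap, hm0, AffineMap.lineMap_apply]
    simpa using hneg.le)
  have hm1 : m ∈ convexHull ℝ (range b₁) := by
    rw [b₁.convexHull_eq_nonneg_coord]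
    intro i
    exact Fin.cases hm0.ge (fun i => (hm i).le) i
  set q := AffineMap.lineMap m (AffineMap.lineMap m v (-1 : ℝ)) ε with hqdef
  have hpos : 0 < 1 + ε := by linarith
  have hcomb : (1 / (1 + ε)) • q + (ε / (1 + ε)) • v = m := by
    rw [hqdef, AffineMap.lineMap_apply_module, AffineMap.lineMap_apply_module]
    ext i
    simp only [Pi.add_apply, Pi.smul_apply, smul_eq_mul]
    field_simp
    ring
  have hc := hg.2 (hQ₁ hq) hvQ (show 0 ≤ 1 / (1 + ε) by positivity)
    (show 0 ≤ ε / (1 + ε) by positivity) (by field_simp)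
  rw [hcomb, hh _ hq, hh _ hm1] at hc
  have hhq : h q = h m - ε * (h v - h m) := by
    rw [hqdef, AffineMap.apply_lineMap, AffineMap.apply_lineMap, AffineMap.lineMap_apply_module,
      AffineMap.lineMap_apply_module]
    simp only [smul_eq_mul]
    ring
  rw [hhq] at hc
  simp only [smul_eq_mul] at hc
  have hc' : (h m - ε * (h v - h m)) + ε * g v ≤ (1 + ε) * h m := by
    have := mul_le_mul_of_nonneg_left hc hpos.le
    have e : (1 + ε) * (1 / (1 + ε) * (h m - ε * (h v - h m)) + ε / (1 + ε) * g v)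
        = (h m - ε * (h v - h m)) + ε * g v := by field_simp
    linarith
  nlinarith

end Adjacent

/-- The barycentric coordinate opposite to the facet `a₂, …, a_{d+1}` vanishes on the intersection
of the two simplices. -/
lemma coord_eq_zero_of_mem_inter {K : Geometry.SimplicialComplex ℝ (Fin d → ℝ)}
    {a : Fin (d + 2) → Fin d → ℝ} (ha : Function.Injective a)
    {b₁ b₂ : AffineBasis (Fin (d + 1)) ℝ (Fin d → ℝ)} (h₁ : ∀ i, b₁ i = a i.castSucc)
    (h₂ : ∀ i, b₂ i = a i.succ) {σ τ : Finset (Fin d → ℝ)} (hσ : σ ∈ K.faces) (hτ : τ ∈ K.faces)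
    (hbσ : range b₁ = σ) (hbτ : range b₂ = τ) :
    ∀ x ∈ convexHull ℝ (range b₁), x ∈ convexHull ℝ (range b₂) → b₁.coord 0 x = 0 := by
  intro x hx1 hx2
  rw [hbσ] at hx1
  rw [hbτ] at hx2
  have hx := K.inter_subset_convexHull hσ hτ ⟨hx1, hx2⟩
  have hconv : Convex ℝ {x | b₁.coord 0 x = 0} := by
    have := (convex_singleton (𝕜 := ℝ) (0 : ℝ)).affine_preimage (b₁.coord 0)
    exact this
  refine convexHull_min ?_ hconv hx
  rw [← hbσ, ← hbτ]
  rintro _ ⟨⟨i, rfl⟩, ⟨j, hj⟩⟩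
  have : i ≠ 0 := by
    rintro rfl
    rw [h₁, h₂] at hj
    exact absurd (ha hj) (by simp)
  exact b₁.coord_apply_ne this.symm

/-! ### From local to global concavity -/

/-- A full-dimensional simplex is not covered by finitely many proper affine subspaces: it has
positive Lebesgue measure and they are null. -/
lemma exists_generic (b : AffineBasis (Fin (d + 1)) ℝ (Fin d → ℝ))
    (𝒮 : Set (Finset (Fin d → ℝ))) (h𝒮 : 𝒮.Finite) (hc : ∀ S ∈ 𝒮, S.card ≤ d) :
    ∃ y ∈ convexHull ℝ (range b), ∀ S ∈ 𝒮, y ∉ affineSpan ℝ (S : Set (Fin d → ℝ)) := by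
  have hnull : MeasureTheory.volume
      (⋃ S ∈ 𝒮, (affineSpan ℝ (S : Set (Fin d → ℝ)) : Set (Fin d → ℝ))) = 0 := by
    rw [MeasureTheory.measure_biUnion_null_iff h𝒮.countable]
    intro S hS
    exact MeasureTheory.Measure.addHaar_affineSubspace _ _ (affineSpan_ne_top_of_card_le (hc S hS))
  have hpos : 0 < MeasureTheory.volume (interior (convexHull ℝ (range b))) :=
    isOpen_interior.measure_pos _
      (interior_convexHull_nonempty_iff_affineSpan_eq_top.2 b.tot)
  by_contra hcon
  push Not at hcon
  refine hpos.ne' (MeasureTheory.measure_mono_null ?_ hnull)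
  intro y hy
  obtain ⟨S, hS, hyS⟩ := hcon y (interior_subset hy)
  exact mem_biUnion hS hyS

lemma vertices_finite {K : Geometry.SimplicialComplex ℝ (Fin d → ℝ)} (hfin : K.faces.Finite) :
    K.vertices.Finite := by
  rw [Geometry.SimplicialComplex.vertices_eq]
  exact hfin.biUnion fun σ _ => σ.finite_toSet

lemma isClosed_convexHull_finset (σ : Finset (Fin d → ℝ)) :
    IsClosed (convexHull ℝ (σ : Set (Fin d → ℝ))) :=
  (σ.finite_toSet.isCompact_convexHull ℝ).isClosed

/-- If `g` lies below the affine extension `H σ` at the apex of every simplex adjacent to `σ`, for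
all `σ`, then `g` lies below every `H σ₀` on all of `|K|`. Walk from a generic point `y` of `σ₀`
to `x`; if the inequality failed at `x`, look at the first point where the walk enters a simplex
`τ` with `H σ₀ x < H τ x`. By genericity it enters `τ` through the relative interior of a facet
shared with some `σ` with `H σ x ≤ H σ₀ x`, so that `x` is on the side of `τ`, where
`H τ ≤ H σ`. -/
lemma le_affine_of_local (K : Geometry.SimplicialComplex ℝ (Fin d → ℝ))
    (hfin : K.faces.Finite) (hconv : Convex ℝ K.space)
    (hpure : ∀ σ ∈ K.faces, ∃ τ ∈ K.faces, σ ⊆ τ ∧ τ.card = d + 1)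
    (g : (Fin d → ℝ) → ℝ) (H : Finset (Fin d → ℝ) → (Fin d → ℝ) →ᵃ[ℝ] ℝ)
    (hH : ∀ σ ∈ K.faces, ∀ x ∈ convexHull ℝ (σ : Set (Fin d → ℝ)), g x = H σ x)
    (hloc : ∀ σ ∈ K.faces, ∀ τ ∈ K.faces, σ.card = d + 1 → τ.card = d + 1 →
      (σ ∩ τ).card = d → ∀ v ∈ τ, v ∉ σ → g v ≤ H σ v)
    (σ₀ : Finset (Fin d → ℝ)) (hσ₀ : σ₀ ∈ K.faces) (hc₀ : σ₀.card = d + 1)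
    (x : Fin d → ℝ) (hx : x ∈ K.space) : g x ≤ H σ₀ x := by
  classical
  by_contra! hcon
  have hV := vertices_finite hfin
  have hfaceV : ∀ σ ∈ K.faces, (σ : Set (Fin d → ℝ)) ⊆ K.vertices := by
    intro σ hσ
    rw [Geometry.SimplicialComplex.vertices_eq]
    exact subset_biUnion_of_mem (u := fun k : Finset (Fin d → ℝ) => (k : Set (Fin d → ℝ))) hσ
  have hcover : ∀ z ∈ K.space, ∃ τ ∈ K.faces, τ.card = d + 1 ∧
      z ∈ convexHull ℝ (τ : Set (Fin d → ℝ)) := by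
    intro z hz
    obtain ⟨σ, hσ, hzσ⟩ := Geometry.SimplicialComplex.mem_space_iff.1 hz
    obtain ⟨τ, hτ, hst, hcτ⟩ := hpure σ hσ
    exact ⟨τ, hτ, hcτ, convexHull_mono (by exact_mod_cast hst) hzσ⟩
  have hcard : ∀ σ τ : Finset (Fin d → ℝ), σ.card = d + 1 → τ.card = d + 1 → σ ≠ τ →
      (σ ∩ τ).card ≤ d := by
    intro σ τ h1 h2 hne
    by_contra! h
    have h3 : σ ∩ τ = σ := Finset.eq_of_subset_of_card_le Finset.inter_subset_left (by omega)
    have h4 : σ ∩ τ = τ := Finset.eq_of_subset_of_card_le Finset.inter_subset_right (by omega)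
    exact hne (h3.symm.trans h4)
  let 𝒮 : Set (Finset (Fin d → ℝ)) :=
    {S | (S : Set (Fin d → ℝ)) ⊆ insert x K.vertices ∧ S.card ≤ d}
  have h𝒮 : 𝒮.Finite := by
    refine ((hV.insert x).toFinset.powerset.finite_toSet).subset fun S hS => ?_
    rw [Finset.mem_coe, Finset.mem_powerset, Finite.subset_toFinset]
    exact hS.1
  obtain ⟨b₀, hb₀⟩ := exists_affineBasis_of_face hσ₀ hc₀
  obtain ⟨y, hy, hgen⟩ := exists_generic b₀ 𝒮 h𝒮 fun S hS => hS.2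
  rw [hb₀] at hy
  have hyS : y ∈ K.space := Geometry.SimplicialComplex.convexHull_subset_space hσ₀ hy
  let p : ℝ → Fin d → ℝ := fun t => AffineMap.lineMap y x t
  have hp : Continuous p := AffineMap.lineMap_continuous
  -- simplices whose affine function exceeds, resp. does not exceed, `H σ₀` at `x`
  let Bad : Set (Finset (Fin d → ℝ)) := {τ | τ ∈ K.faces ∧ τ.card = d + 1 ∧ H σ₀ x < H τ x}
  let Good : Set (Finset (Fin d → ℝ)) := {τ | τ ∈ K.faces ∧ τ.card = d + 1 ∧ H τ x ≤ H σ₀ x}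
  have hclosed : ∀ B : Set (Finset (Fin d → ℝ)), B ⊆ K.faces →
      IsClosed (p ⁻¹' ⋃ τ ∈ B, convexHull ℝ (τ : Set (Fin d → ℝ))) := fun B hB =>
    ((hfin.subset hB).isClosed_biUnion fun τ _ => isClosed_convexHull_finset τ).preimage hp
  have hBad := hclosed Bad fun τ hτ => hτ.1
  have hGood := hclosed Good fun τ hτ => hτ.1
  set TB := p ⁻¹' ⋃ τ ∈ Bad, convexHull ℝ (τ : Set (Fin d → ℝ)) with hTB
  set TG := p ⁻¹' ⋃ τ ∈ Good, convexHull ℝ (τ : Set (Fin d → ℝ)) with hTG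
  have h1 : (1 : ℝ) ∈ TB := by
    obtain ⟨τ, hτ, hcτ, hxτ⟩ := hcover x hx
    refine mem_biUnion (x := τ) ⟨hτ, hcτ, ?_⟩ (by simpa [p] using hxτ)
    rwa [← hH τ hτ x hxτ]
  obtain ⟨t₀, ⟨⟨ht0, ht1⟩, htB⟩, hmin⟩ := (isCompact_Icc.inter_right hBad).exists_isLeast
    ⟨1, ⟨zero_le_one, le_rfl⟩, h1⟩
  have hpS : ∀ t, 0 ≤ t → t ≤ 1 → p t ∈ K.space := fun t h0 h1 =>
    hconv.lineMap_mem hyS hx ⟨h0, h1⟩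
  obtain ⟨τ, hτB, hpτ⟩ := mem_iUnion₂.1 htB
  obtain ⟨hτ, hcτ, hbadτ⟩ := hτB
  have ht0' : 0 < t₀ := by
    refine lt_of_le_of_ne ht0 fun h0 => ?_
    have hpy : p t₀ = y := by simp [p, ← h0]
    rw [hpy] at hpτ
    have hne : σ₀ ≠ τ := by
      rintro rfl
      exact lt_irrefl _ hbadτ
    have hmem := K.inter_subset_convexHull hσ₀ hτ ⟨hy, hpτ⟩
    rw [← Finset.coe_inter] at hmem
    refine hgen (σ₀ ∩ τ) ⟨?_, hcard _ _ hc₀ hcτ hne⟩ (convexHull_subset_affineSpan _ hmem)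
    rw [Finset.coe_inter]
    exact inter_subset_left.trans ((hfaceV _ hσ₀).trans (subset_insert _ _))
  have htG : t₀ ∈ TG := by
    have hsub : Ico 0 t₀ ⊆ TG := by
      intro t ht
      obtain ⟨ρ, hρ, hcρ, hpρ⟩ := hcover (p t) (hpS t ht.1 (ht.2.le.trans ht1))
      refine mem_biUnion (x := ρ) ⟨hρ, hcρ, ?_⟩ hpρ
      by_contra! hb
      have : t ∈ TB := mem_biUnion (x := ρ) ⟨hρ, hcρ, hb⟩ hpρ
      exact absurd (hmin ⟨⟨ht.1, ht.2.le.trans ht1⟩, this⟩) (not_le.2 ht.2)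
    have := hGood.closure_subset_iff.2 hsub
    rw [closure_Ico ht0'.ne] at this
    exact this ⟨ht0, le_rfl⟩
  obtain ⟨σ, hσG, hpσ⟩ := mem_iUnion₂.1 htG
  obtain ⟨hσ, hcσ, hgoodσ⟩ := hσG
  have ht1' : t₀ < 1 := by
    refine lt_of_le_of_ne ht1 fun h => ?_
    have hpx : p t₀ = x := by simp [p, h]
    rw [hpx] at hpσ
    rw [hH σ hσ x hpσ] at hcon
    exact absurd hgoodσ (not_le.2 hcon)
  have hne : σ ≠ τ := by
    rintro rfl
    exact absurd hgoodσ (not_le.2 hbadτ)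
  -- the walk misses every face of codimension at least two
  have hcodim : ∀ S : Finset (Fin d → ℝ), (S : Set (Fin d → ℝ)) ⊆ K.vertices → S.card < d →
      p t₀ ∉ convexHull ℝ (S : Set (Fin d → ℝ)) := by
    intro S hSV hSc hmem
    refine hgen (insert x S) ⟨?_, (Finset.card_insert_le _ _).trans hSc⟩ ?_
    · rw [Finset.coe_insert]
      exact insert_subset_insert hSV
    · have e : y = AffineMap.lineMap x (p t₀) (1 / (1 - t₀)) := by
        have : 1 - t₀ ≠ 0 := by linarith
        simp only [p, AffineMap.lineMap_apply_module]
        ext i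
        simp only [Pi.add_apply, Pi.smul_apply, smul_eq_mul]
        field_simp
        ring
      rw [e]
      apply AffineMap.lineMap_mem
      · exact subset_affineSpan ℝ _ (by simp)
      · exact affineSpan_mono ℝ (by simp) (convexHull_subset_affineSpan _ hmem)
  have hmem := K.inter_subset_convexHull hσ hτ ⟨hpσ, hpτ⟩
  rw [← Finset.coe_inter] at hmem
  have hinter : (σ ∩ τ).card = d := by
    refine le_antisymm (hcard _ _ hcσ hcτ hne) ?_
    by_contra! hlt
    refine hcodim _ ?_ hlt hmem
    rw [Finset.coe_inter]
    exact inter_subset_left.trans (hfaceV _ hσ)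
  obtain ⟨v, hv⟩ : ∃ v, τ \ σ = {v} := by
    rw [← Finset.card_eq_one, Finset.card_sdiff, hinter, hcτ]
    omega
  have hvτ : v ∈ τ := (Finset.mem_sdiff.1 (hv ▸ Finset.mem_singleton_self v)).1
  have hvσ : v ∉ σ := (Finset.mem_sdiff.1 (hv ▸ Finset.mem_singleton_self v)).2
  have hother : ∀ w ∈ τ, w ≠ v → w ∈ σ := by
    intro w hw hwv
    by_contra hwσ
    have : w ∈ τ \ σ := Finset.mem_sdiff.2 ⟨hw, hwσ⟩
    rw [hv, Finset.mem_singleton] at this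
    exact hwv this
  obtain ⟨b, hb⟩ := exists_affineBasis_of_face hτ hcτ
  have hbτ : ∀ i, b i ∈ τ := fun i => by
    have : b i ∈ (τ : Set (Fin d → ℝ)) := hb ▸ mem_range_self i
    exact_mod_cast this
  obtain ⟨k, hk⟩ : v ∈ range b := by rw [hb]; exact_mod_cast hvτ
  have hdiff : H τ x - H σ x = b.coord k x * (g v - H σ v) := by
    have h2 := affine_eq_sum b (H τ - H σ) x
    rw [Finset.sum_eq_single k] at h2
    · rw [hk] at h2
      simp only [AffineMap.coe_sub, Pi.sub_apply] at h2
      rw [h2, hH τ hτ v (subset_convexHull ℝ _ (by exact_mod_cast hvτ))]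
    · intro i _ hik
      have hbi : b i ∈ σ := hother _ (hbτ i) fun h => hik (b.ind.injective (h.trans hk.symm))
      have e1 := hH τ hτ (b i) (subset_convexHull ℝ _ (by exact_mod_cast hbτ i))
      have e2 := hH σ hσ (b i) (subset_convexHull ℝ _ (by exact_mod_cast hbi))
      simp only [AffineMap.coe_sub, Pi.sub_apply]
      rw [← e1, ← e2]
      simp
    · simp
  have hk0 : b.coord k (p t₀) = 0 := by
    have hcv : Convex ℝ {z | b.coord k z = 0} :=
      (convex_singleton (𝕜 := ℝ) (0 : ℝ)).affine_preimage (b.coord k)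
    refine convexHull_min ?_ hcv hmem
    intro w hw
    rw [Finset.coe_inter] at hw
    obtain ⟨i, rfl⟩ : w ∈ range b := by rw [hb]; exact hw.2
    refine b.coord_apply_ne fun h => hvσ ?_
    rw [← hk, h]
    exact_mod_cast hw.1
  have hkx : 0 ≤ b.coord k x := by
    by_contra! hneg
    have hky : 0 ≤ b.coord k y := by
      have e : b.coord k (p t₀) = (1 - t₀) * b.coord k y + t₀ * b.coord k x := by
        simp only [p]
        rw [AffineMap.apply_lineMap, AffineMap.lineMap_apply_module, smul_eq_mul, smul_eq_mul]
      rw [hk0] at e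
      nlinarith
    have hpτ' := hpτ
    rw [← hb] at hpτ'
    obtain ⟨ε, hε, hε1, hstep⟩ := exists_step b (p t₀) y (by
      intro i
      have hnn : 0 ≤ b.coord i (p t₀) := by
        have := hpτ'
        rw [b.convexHull_eq_nonneg_coord] at this
        exact this i
      rcases hnn.lt_or_eq with h | h
      · exact Or.inl h
      by_cases hik : i = k
      · subst hik
        exact Or.inr ⟨hk0, hky⟩
      exfalso
      refine hcodim ((τ.erase v).erase (b i)) ?_ ?_ (mem_convexHull_of_coord b hpτ' ?_)
      · intro w hw
        exact hfaceV τ hτ (Finset.mem_of_mem_erase (Finset.mem_of_mem_erase hw))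
      · have hbi : b i ∈ τ.erase v :=
          Finset.mem_erase.2 ⟨fun h => hik (b.ind.injective (h.trans hk.symm)), hbτ i⟩
        have c1 := Finset.card_erase_lt_of_mem hbi
        have c2 := Finset.card_erase_lt_of_mem hvτ
        omega
      · intro j hj
        rw [Finset.mem_coe, Finset.mem_erase, Finset.mem_erase]
        refine ⟨fun hji => hj ?_, fun hjv => hj ?_, hbτ j⟩
        · rw [b.ind.injective hji, ← h]
        · rw [b.ind.injective (hjv.trans hk.symm), hk0])
    have e : AffineMap.lineMap (p t₀) y ε = p (t₀ * (1 - ε)) := by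
      simp only [p, AffineMap.lineMap_apply_module]
      ext i
      simp only [Pi.add_apply, Pi.smul_apply, smul_eq_mul]
      ring
    rw [e, hb] at hstep
    have hmem' : t₀ * (1 - ε) ∈ TB := mem_biUnion (x := τ) ⟨hτ, hcτ, hbadτ⟩ hstep
    have hle := hmin ⟨⟨by nlinarith, by nlinarith⟩, hmem'⟩
    nlinarith
  have hl := hloc σ hσ τ hτ hcσ hcτ hinter v hvτ hvσ
  nlinarith [mul_nonneg hkx (sub_nonneg.2 hl)]

/-! ### The determinant inequalities -/

/-- The determinant inequalities over all ordered pairs of adjacent `d`-simplices of `K`. -/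
def DetCond (K : Geometry.SimplicialComplex ℝ (Fin d → ℝ)) (ω : ↥K.vertices → ℝ) : Prop :=
  ∀ a : Fin (d + 2) → ↥K.vertices, Function.Injective a →
    Finset.image (fun i : Fin (d + 1) => (↑(a (Fin.castSucc i)) : Fin d → ℝ))
      Finset.univ ∈ K.faces →
    Finset.image (fun i : Fin (d + 1) => (↑(a (Fin.succ i)) : Fin d → ℝ))
      Finset.univ ∈ K.faces →
    0 < (homMatrix fun j => (↑(a (Fin.castSucc j)) : Fin d → ℝ)).det →
    (liftMatrix (fun j => (↑(a j) : Fin d → ℝ)) fun j => ω (a j)).det ≤ 0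

lemma mem_vertices_of_mem {K : Geometry.SimplicialComplex ℝ (Fin d → ℝ)}
    {σ : Finset (Fin d → ℝ)} (hσ : σ ∈ K.faces) {v : Fin d → ℝ} (hv : v ∈ σ) :
    v ∈ K.vertices :=
  K.down_closed hσ (Finset.singleton_subset_iff.2 hv) (Finset.singleton_nonempty v)

lemma DetCond.apply {K : Geometry.SimplicialComplex ℝ (Fin d → ℝ)} {ω : ↥K.vertices → ℝ}
    (hcond : DetCond K ω) {g : (Fin d → ℝ) → ℝ} (hg : ∀ v : ↥K.vertices, g v = ω v)
    {a : Fin (d + 2) → Fin d → ℝ} (ha : Function.Injective a)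
    (h1 : Finset.image (fun i : Fin (d + 1) => a i.castSucc) Finset.univ ∈ K.faces)
    (h2 : Finset.image (fun i : Fin (d + 1) => a i.succ) Finset.univ ∈ K.faces)
    (hpos : 0 < (homMatrix fun j => a j.castSucc).det) :
    (liftMatrix a fun j => g (a j)).det ≤ 0 := by
  have hav : ∀ i, a i ∈ K.vertices := by
    intro i
    refine Fin.cases ?_ (fun i => ?_) i
    · exact mem_vertices_of_mem h1 (Finset.mem_image.2 ⟨0, Finset.mem_univ _, rfl⟩)
    · exact mem_vertices_of_mem h2 (Finset.mem_image.2 ⟨i, Finset.mem_univ _, rfl⟩)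
  have := hcond (fun i => ⟨a i, hav i⟩) (fun i j h => ha (congrArg Subtype.val h)) h1 h2 hpos
  simpa only [← hg] using this

/-- The sequence `u, f₁, …, f_d, v`. -/
def flank (u : Fin d → ℝ) (f : Fin d → Fin d → ℝ) (v : Fin d → ℝ) : Fin (d + 2) → Fin d → ℝ :=
  Fin.cons u (Fin.snoc f v : Fin (d + 1) → Fin d → ℝ)

section Flank

variable (u : Fin d → ℝ) (f : Fin d → Fin d → ℝ) (v : Fin d → ℝ)

lemma flank_zero : flank u f v 0 = u := rfl

lemma flank_last : flank u f v (Fin.last _) = v := by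
  rw [← Fin.succ_last]
  simp [flank]

lemma flank_mid (i : Fin d) : flank u f v i.castSucc.succ = f i := by
  simp [flank]

lemma flank_mid' (i : Fin d) : flank u f v i.succ.castSucc = f i := by
  rw [← Fin.succ_castSucc, flank_mid]

lemma image_flank_castSucc :
    Finset.image (fun i : Fin (d + 1) => flank u f v i.castSucc) Finset.univ
      = insert u (Finset.image f Finset.univ) := by
  ext x
  simp [Fin.exists_fin_succ, flank_zero, flank_mid, eq_comm]

lemma image_flank_succ :
    Finset.image (fun i : Fin (d + 1) => flank u f v i.succ) Finset.univ
      = insert v (Finset.image f Finset.univ) := by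
  ext x
  simp [Fin.exists_fin_succ', flank_last, flank_mid, eq_comm, or_comm]

variable {u f v}

lemma flank_injective (hf : Function.Injective f) (hu : u ∉ range f) (hv : v ∉ range f)
    (huv : u ≠ v) : Function.Injective (flank u f v) := by
  rw [flank, Fin.cons_injective_iff, Fin.snoc_injective_iff]
  refine ⟨?_, hf, hv⟩
  rw [Fin.range_snoc]
  simp only [mem_insert_iff, not_or]
  exact ⟨huv, hu⟩

end Flank

/-- The determinant inequalities say that the interpolant lies below the affine extension from a
simplex at the apex of each adjacent simplex. An ordering `u, f, v` for which `u, f` is negatively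
oriented is handled through `v, f, u`, which starts with a positively oriented simplex because `u`
and `v` lie on opposite sides of the common facet. -/
lemma local_of_detCond {K : Geometry.SimplicialComplex ℝ (Fin d → ℝ)} {ω : ↥K.vertices → ℝ}
    (hcond : DetCond K ω) {g : (Fin d → ℝ) → ℝ} (hg : ∀ v : ↥K.vertices, g v = ω v)
    (H : Finset (Fin d → ℝ) → (Fin d → ℝ) →ᵃ[ℝ] ℝ)
    (hH : ∀ σ ∈ K.faces, ∀ x ∈ convexHull ℝ (σ : Set (Fin d → ℝ)), g x = H σ x)
    (σ : Finset (Fin d → ℝ)) (hσ : σ ∈ K.faces) (τ : Finset (Fin d → ℝ)) (hτ : τ ∈ K.faces)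
    (hcσ : σ.card = d + 1) (hcτ : τ.card = d + 1) (hinter : (σ ∩ τ).card = d)
    (v : Fin d → ℝ) (hvτ : v ∈ τ) (hvσ : v ∉ σ) : g v ≤ H σ v := by
  classical
  have hd : 0 < d := by
    rcases Nat.eq_zero_or_pos d with rfl | h
    · obtain ⟨u, hu⟩ := Geometry.SimplicialComplex.nonempty_of_mem_faces hσ
      rw [Subsingleton.elim u v] at hu
      exact absurd hu hvσ
    · exact h
  obtain ⟨u, hu⟩ : (σ \ τ).Nonempty := by
    rw [← Finset.card_pos, Finset.card_sdiff, Finset.inter_comm, hinter, hcσ]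
    omega
  obtain ⟨huσ, huτ⟩ := Finset.mem_sdiff.1 hu
  let e := (σ ∩ τ).equivFinOfCardEq hinter
  let f : Fin d → Fin d → ℝ := fun i => (e.symm i : Fin d → ℝ)
  have hf : Function.Injective f := Subtype.val_injective.comp e.symm.injective
  have himg : Finset.image f Finset.univ = σ ∩ τ := by
    ext x
    simp only [Finset.mem_image, Finset.mem_univ, true_and, f]
    exact ⟨fun ⟨i, hi⟩ => hi ▸ (e.symm i).2, fun hx => ⟨e ⟨x, hx⟩, by simp⟩⟩
  have hfmem : ∀ i, f i ∈ σ ∧ f i ∈ τ := fun i => Finset.mem_inter.1 (e.symm i).2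
  have huf : u ∉ range f := by
    rintro ⟨i, rfl⟩
    exact huτ (hfmem i).2
  have hvf : v ∉ range f := by
    rintro ⟨i, rfl⟩
    exact hvσ (hfmem i).1
  have huv : u ≠ v := by
    rintro rfl
    exact huτ hvτ
  have hσeq : insert u (σ ∩ τ) = σ := by
    apply Finset.eq_of_subset_of_card_le
    · exact Finset.insert_subset huσ Finset.inter_subset_left
    · rw [Finset.card_insert_of_notMem (fun h => huτ (Finset.mem_inter.1 h).2), hinter, hcσ]
  have hτeq : insert v (σ ∩ τ) = τ := by
    apply Finset.eq_of_subset_of_card_le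
    · exact Finset.insert_subset hvτ Finset.inter_subset_right
    · rw [Finset.card_insert_of_notMem (fun h => hvσ (Finset.mem_inter.1 h).1), hinter, hcτ]
  have hi1 := image_flank_castSucc u f v
  have hi2 := image_flank_succ u f v
  have hi3 := image_flank_castSucc v f u
  have hi4 := image_flank_succ v f u
  rw [himg, hσeq] at hi1 hi4
  rw [himg, hτeq] at hi2 hi3
  have ha := flank_injective hf huf hvf huv
  have ha' := flank_injective hf hvf huf huv.symm
  obtain ⟨b₁, hb₁⟩ := exists_affineBasis_of_image_mem (K := K)
    (ha.comp (Fin.castSucc_injective _)) (by rw [← hi1] at hσ; exact hσ)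
  obtain ⟨b₂, hb₂⟩ := exists_affineBasis_of_image_mem (K := K)
    (ha.comp (Fin.succ_injective _)) (by rw [← hi2] at hτ; exact hτ)
  have h₁ : ∀ i, b₁ i = flank u f v i.castSucc := fun i => congrFun hb₁ i
  have h₂ : ∀ i, b₂ i = flank u f v i.succ := fun i => congrFun hb₂ i
  have hr₁ : range b₁ = (σ : Set (Fin d → ℝ)) := by
    rw [hb₁, ← hi1]
    simp [Function.comp_def]
  have hr₂ : range b₂ = (τ : Set (Fin d → ℝ)) := by
    rw [hb₂, ← hi2]
    simp [Function.comp_def]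
  have hneg := coord_apex_neg hd h₁ h₂ (coord_eq_zero_of_mem_inter ha h₁ h₂ hσ hτ hr₁ hr₂)
  rw [flank_last] at hneg
  have hHσ : ∀ w ∈ σ, H σ w = g w := fun w hw =>
    (hH σ hσ w (subset_convexHull ℝ _ (by exact_mod_cast hw))).symm
  have hHτ : ∀ w ∈ τ, H τ w = g w := fun w hw =>
    (hH τ hτ w (subset_convexHull ℝ _ (by exact_mod_cast hw))).symm
  have hne := det_homMatrix_ne_zero b₁
  have hD := det_liftMatrix (flank u f v) (fun j => g (flank u f v j)) (H σ) (fun i => hHσ _ (by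
    rw [← hi1]; exact Finset.mem_image_of_mem _ (Finset.mem_univ i)))
  have hD' := det_liftMatrix (flank v f u) (fun j => g (flank v f u j)) (H τ) (fun i => hHτ _ (by
    rw [← hi3]; exact Finset.mem_image_of_mem _ (Finset.mem_univ i)))
  have hbfun : (fun i : Fin (d + 1) => flank u f v i.castSucc) = b₁ := funext fun i => (h₁ i).symm
  rw [hbfun, flank_last] at hD
  rw [flank_last] at hD'
  rcases hne.lt_or_gt with hlt | hgt
  · have hdet : (homMatrix fun i : Fin (d + 1) => flank v f u i.castSucc).det
        = b₁.coord 0 v * (homMatrix b₁).det :=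
      det_homMatrix_cons b₁ v rfl fun i => by rw [h₁, flank_mid', flank_mid']
    have hpos : 0 < (homMatrix fun i : Fin (d + 1) => flank v f u i.castSucc).det := by
      rw [hdet]
      exact mul_pos_of_neg_of_neg hneg hlt
    have hle := hcond.apply hg ha' (by rwa [hi3]) (by rwa [hi4]) hpos
    rw [hD'] at hle
    have hu' : g u - H τ u ≤ 0 := by
      by_contra! h
      exact absurd hle (not_le.2 (mul_pos hpos h))
    have hdiff := affine_eq_sum b₁ (H σ - H τ) v
    rw [Fin.sum_univ_succ, Finset.sum_eq_zero, add_zero] at hdiff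
    · rw [h₁, Fin.castSucc_zero, flank_zero] at hdiff
      simp only [AffineMap.coe_sub, Pi.sub_apply] at hdiff
      rw [hHτ v hvτ, hHσ u huσ] at hdiff
      nlinarith
    · intro i _
      rw [h₁, flank_mid']
      simp only [AffineMap.coe_sub, Pi.sub_apply]
      rw [hHτ _ (hfmem i).2, hHσ _ (hfmem i).1]
      simp
  · have hle := hcond.apply hg ha (by rwa [hi1]) (by rwa [hi2]) (by rwa [hbfun])
    rw [hD] at hle
    by_contra! h
    exact absurd hle (not_le.2 (mul_pos hgt (sub_pos.2 h)))

lemma concaveOn_of_detCond {K : Geometry.SimplicialComplex ℝ (Fin d → ℝ)}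
    (hfin : K.faces.Finite) (hconv : Convex ℝ K.space)
    (hpure : ∀ σ ∈ K.faces, ∃ τ ∈ K.faces, σ ⊆ τ ∧ τ.card = d + 1)
    {ω : ↥K.vertices → ℝ} (hcond : DetCond K ω) {g : (Fin d → ℝ) → ℝ}
    (hg : ∀ v : ↥K.vertices, g v = ω v)
    (haff : ∀ σ ∈ K.faces, ∃ h : (Fin d → ℝ) →ᵃ[ℝ] ℝ,
      ∀ x ∈ convexHull ℝ (σ : Set (Fin d → ℝ)), g x = h x) :
    ConcaveOn ℝ K.space g := by
  choose! H hH using haff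
  have hle := le_affine_of_local K hfin hconv hpure g H hH (local_of_detCond hcond hg H hH)
  refine ⟨hconv, fun x hx y hy s t hs ht hst => ?_⟩
  obtain ⟨σ, hσ, hzσ⟩ := Geometry.SimplicialComplex.mem_space_iff.1 (hconv hx hy hs ht hst)
  obtain ⟨τ, hτ, hst', hcτ⟩ := hpure σ hσ
  rw [hH τ hτ _ (convexHull_mono (by exact_mod_cast hst') hzσ),
    Convex.combo_affine_apply hst]
  have h1 := hle τ hτ hcτ x hx
  have h2 := hle τ hτ hcτ y hy
  simp only [smul_eq_mul]
  gcongr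

/-- The piecewise-linear interpolant exists. -/
lemma exists_interpolant (K : Geometry.SimplicialComplex ℝ (Fin d → ℝ))
    (hpure : ∀ σ ∈ K.faces, ∃ τ ∈ K.faces, σ ⊆ τ ∧ τ.card = d + 1) (ω : ↥K.vertices → ℝ) :
    ∃ g : (Fin d → ℝ) → ℝ, (∀ σ ∈ K.faces, ∃ h : (Fin d → ℝ) →ᵃ[ℝ] ℝ,
      ∀ x ∈ convexHull ℝ (σ : Set (Fin d → ℝ)), g x = h x) ∧ ∀ v : ↥K.vertices, g v = ω v := by
  classical
  have hex : ∀ σ ∈ K.faces, ∃ h : (Fin d → ℝ) →ᵃ[ℝ] ℝ, ∀ v : ↥K.vertices,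
      (v : Fin d → ℝ) ∈ σ → h v = ω v := by
    intro σ hσ
    obtain ⟨τ, hτ, hst, hcτ⟩ := hpure σ hσ
    obtain ⟨b, hb⟩ := exists_affineBasis_of_face hτ hcτ
    have hbτ : ∀ i, b i ∈ τ := fun i => by
      have : b i ∈ (τ : Set (Fin d → ℝ)) := hb ▸ mem_range_self i
      exact_mod_cast this
    obtain ⟨h, hh⟩ := exists_affine_eq b fun i => ω ⟨b i, mem_vertices_of_mem hτ (hbτ i)⟩
    refine ⟨h, fun v hv => ?_⟩
    obtain ⟨i, hi⟩ : (v : Fin d → ℝ) ∈ range b := by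
      rw [hb]
      exact_mod_cast hst hv
    rw [← hi, hh]
    congr 1
    exact Subtype.ext hi
  choose! H hH using hex
  let g : (Fin d → ℝ) → ℝ := fun x =>
    if h : ∃ σ ∈ K.faces, x ∈ convexHull ℝ (σ : Set (Fin d → ℝ)) then H h.choose x else 0
  have hgH : ∀ σ ∈ K.faces, ∀ x ∈ convexHull ℝ (σ : Set (Fin d → ℝ)), g x = H σ x := by
    intro σ hσ x hx
    have h : ∃ σ ∈ K.faces, x ∈ convexHull ℝ (σ : Set (Fin d → ℝ)) := ⟨σ, hσ, hx⟩
    simp only [g, dif_pos h]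
    obtain ⟨hρ, hxρ⟩ := h.choose_spec
    set ρ := h.choose
    have hcv : Convex ℝ {z | (H ρ - H σ) z = 0} :=
      (convex_singleton (𝕜 := ℝ) (0 : ℝ)).affine_preimage (H ρ - H σ)
    have hmem : x ∈ {z | (H ρ - H σ) z = 0} := by
      refine convexHull_min ?_ hcv (K.inter_subset_convexHull hρ hσ ⟨hxρ, hx⟩)
      rintro w ⟨hw1, hw2⟩
      have hwV : w ∈ K.vertices := mem_vertices_of_mem hρ hw1
      have e1 := hH ρ hρ ⟨w, hwV⟩ hw1
      have e2 := hH σ hσ ⟨w, hwV⟩ hw2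
      simp only [mem_ofPred_eq, AffineMap.coe_sub, Pi.sub_apply]
      rw [e1, e2, sub_self]
    simpa [sub_eq_zero] using hmem
  refine ⟨g, fun σ hσ => ⟨H σ, hgH σ hσ⟩, fun v => ?_⟩
  rw [hgH _ v.2 v (subset_convexHull ℝ _ (by simp))]
  exact hH _ v.2 v (by simp)

lemma detCond_of_concaveOn {K : Geometry.SimplicialComplex ℝ (Fin d → ℝ)}
    {ω : ↥K.vertices → ℝ} {g : (Fin d → ℝ) → ℝ} (hg : ∀ v : ↥K.vertices, g v = ω v)
    (haff : ∀ σ ∈ K.faces, ∃ h : (Fin d → ℝ) →ᵃ[ℝ] ℝ,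
      ∀ x ∈ convexHull ℝ (σ : Set (Fin d → ℝ)), g x = h x)
    (hconc : ConcaveOn ℝ K.space g) : DetCond K ω := by
  intro a ha hσ hτ hpos
  have hd : 0 < d := by
    rcases Nat.eq_zero_or_pos d with rfl | h
    · have : (0 : Fin 2) = 1 := ha (Subsingleton.elim _ _)
      simp at this
    · exact h
  have ha' : Function.Injective fun i => (a i : Fin d → ℝ) := Subtype.val_injective.comp ha
  obtain ⟨b₁, hb₁⟩ := exists_affineBasis_of_image_mem (K := K)
    (ha'.comp (Fin.castSucc_injective _)) hσ
  obtain ⟨b₂, hb₂⟩ := exists_affineBasis_of_image_mem (K := K)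
    (ha'.comp (Fin.succ_injective _)) hτ
  have h₁ : ∀ i, b₁ i = a i.castSucc := fun i => congrFun hb₁ i
  have h₂ : ∀ i, b₂ i = a i.succ := fun i => congrFun hb₂ i
  obtain ⟨h, hh⟩ := haff _ hσ
  have hr₁ : range b₁ = ((Finset.image (fun i : Fin (d + 1) => (a i.castSucc : Fin d → ℝ))
      Finset.univ : Finset (Fin d → ℝ)) : Set (Fin d → ℝ)) := by
    rw [hb₁]
    simp [Function.comp_def]
  have hr₂ : range b₂ = ((Finset.image (fun i : Fin (d + 1) => (a i.succ : Fin d → ℝ))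
      Finset.univ : Finset (Fin d → ℝ)) : Set (Fin d → ℝ)) := by
    rw [hb₂]
    simp [Function.comp_def]
  have hle := le_of_concaveOn (a := fun i => (a i : Fin d → ℝ)) hd h₁ h₂
    (coord_eq_zero_of_mem_inter ha' h₁ h₂ hσ hτ hr₁ hr₂) hconc
    (hr₁ ▸ Geometry.SimplicialComplex.convexHull_subset_space hσ)
    (hr₂ ▸ Geometry.SimplicialComplex.convexHull_subset_space hτ) h (by rwa [hr₁])
  rw [det_liftMatrix _ _ h]
  · apply mul_nonpos_of_nonneg_of_nonpos hpos.le
    rw [← hg]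
    exact sub_nonpos.2 hle
  · intro i
    rw [← hg, hh _ (subset_convexHull ℝ _ _)]
    exact Finset.mem_coe.2 (Finset.mem_image_of_mem
      (fun i : Fin (d + 1) => (a i.castSucc : Fin d → ℝ)) (Finset.mem_univ i))

/-- The determinant of `liftMatrix` as a linear functional of the heights. -/
noncomputable def liftDet {K : Geometry.SimplicialComplex ℝ (Fin d → ℝ)}
    (a : Fin (d + 2) → ↥K.vertices) : (↥K.vertices → ℝ) →ₗ[ℝ] ℝ :=
  (Matrix.detRowAlternating.toMultilinearMap.toLinearMap
    (liftMatrix (fun j => (a j : Fin d → ℝ)) 0) (Fin.last _)).comp (LinearMap.funLeft ℝ ℝ a)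

lemma liftDet_apply {K : Geometry.SimplicialComplex ℝ (Fin d → ℝ)}
    (a : Fin (d + 2) → ↥K.vertices) (ω : ↥K.vertices → ℝ) :
    liftDet a ω = (liftMatrix (fun j => (a j : Fin d → ℝ)) fun j => ω (a j)).det := by
  have : liftDet a ω = ((liftMatrix (fun j => (a j : Fin d → ℝ)) 0).updateRow (Fin.last _)
      fun j => ω (a j)).det := rfl
  rw [this]
  congr 1
  ext i j
  refine Fin.lastCases ?_ (fun i => ?_) i
  · rw [Matrix.updateRow_self]
    simp [liftMatrix]
  · rw [Matrix.updateRow_ne (Fin.castSucc_lt_last i).ne]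
    simp only [liftMatrix, Matrix.of_apply, Fin.val_castSucc]
    split_ifs with h1 h2
    · rfl
    · rfl
    · omega

lemma exists_halfspaces (K : Geometry.SimplicialComplex ℝ (Fin d → ℝ)) (hfin : K.faces.Finite) :
    ∃ (m : ℕ) (f : Fin m → ((↥K.vertices → ℝ) →ₗ[ℝ] ℝ)),
      {ω | DetCond K ω} = ⋂ i, {ω | f i ω ≤ 0} := by
  have hV := vertices_finite hfin
  have : Finite ↥K.vertices := hV
  let A := {a : Fin (d + 2) → ↥K.vertices // Function.Injective a ∧
    Finset.image (fun i : Fin (d + 1) => (↑(a (Fin.castSucc i)) : Fin d → ℝ))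
      Finset.univ ∈ K.faces ∧
    Finset.image (fun i : Fin (d + 1) => (↑(a (Fin.succ i)) : Fin d → ℝ))
      Finset.univ ∈ K.faces ∧
    0 < (homMatrix fun j => (↑(a (Fin.castSucc j)) : Fin d → ℝ)).det}
  obtain ⟨m, ⟨e⟩⟩ := Finite.exists_equiv_fin A
  refine ⟨m, fun i => liftDet (e.symm i).1, ?_⟩
  ext ω
  simp only [mem_ofPred_eq, mem_iInter, liftDet_apply]
  constructor
  · intro h i
    obtain ⟨h1, h2, h3, h4⟩ := (e.symm i).2
    exact h _ h1 h2 h3 h4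
  · intro h a h1 h2 h3 h4
    have := h (e ⟨a, h1, h2, h3, h4⟩)
    rwa [e.symm_apply_apply] at this

end SecondaryCone

/-- For a finite, pure `d`-dimensional geometric simplicial complex `K`
in `ℝ^d` with convex space having nonempty interior, the secondary cone
`C(K) = {ω ∈ ℝ^V : the piecewise-linear interpolant g_{K,ω} is concave on |K|}`
equals the set of `ω` satisfying, for every ordered pair of `(d+1)`-element faces
`{a₁,…,a_{d+1}}` and `{a₂,…,a_{d+2}}` sharing `a₂,…,a_{d+1}` with the first one
positively oriented, the determinant inequality
`det[(aᵢ, 1, ω(aᵢ))_{i=1,…,d+2}] ≤ 0`. In particular `C(K)` is a closed convex cone and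
an intersection of finitely many closed linear half-spaces of `ℝ^V`. -/
theorem stmt5 (d : ℕ) (K : Geometry.SimplicialComplex ℝ (Fin d → ℝ))
    (hfin : K.faces.Finite)
    (hconv : Convex ℝ K.space) (hint : (interior K.space).Nonempty)
    (hpure : ∀ σ ∈ K.faces, ∃ τ ∈ K.faces, σ ⊆ τ ∧ τ.card = d + 1) :
    let C : Set (↥K.vertices → ℝ) := {ω | ∀ g : (Fin d → ℝ) → ℝ,
      ((∀ σ ∈ K.faces, ∃ h : (Fin d → ℝ) →ᵃ[ℝ] ℝ,
          ∀ x ∈ convexHull ℝ (σ : Set (Fin d → ℝ)), g x = h x) ∧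
        ∀ v : ↥K.vertices, g ↑v = ω v) →
      ConcaveOn ℝ K.space g}
    C = {ω | ∀ a : Fin (d + 2) → ↥K.vertices, Function.Injective a →
        Finset.image (fun i : Fin (d + 1) => (↑(a (Fin.castSucc i)) : Fin d → ℝ))
          Finset.univ ∈ K.faces →
        Finset.image (fun i : Fin (d + 1) => (↑(a (Fin.succ i)) : Fin d → ℝ))
          Finset.univ ∈ K.faces →
        0 < Matrix.det (Matrix.of fun i j : Fin (d + 1) =>
          if h : (i : ℕ) < d then (↑(a (Fin.castSucc j)) : Fin d → ℝ) ⟨i, h⟩ else 1) →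
        Matrix.det (Matrix.of fun i j : Fin (d + 2) =>
          if hi : (i : ℕ) < d then (↑(a j) : Fin d → ℝ) ⟨i, hi⟩
          else if (i : ℕ) = d then 1 else ω (a j)) ≤ 0} ∧
      IsClosed C ∧ Convex ℝ C ∧ (∀ c : ℝ, 0 ≤ c → ∀ ω ∈ C, c • ω ∈ C) ∧
      ∃ (m : ℕ) (f : Fin m → ((↥K.vertices → ℝ) →ₗ[ℝ] ℝ)),
        C = ⋂ i, {ω | f i ω ≤ 0} := by
  intro C
  have hC : C = {ω | SecondaryCone.DetCond K ω} := by
    ext ω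
    constructor
    · intro hω
      obtain ⟨g, haff, hg⟩ := SecondaryCone.exists_interpolant K hpure ω
      exact SecondaryCone.detCond_of_concaveOn hg haff (hω g ⟨haff, hg⟩)
    · rintro hω g ⟨haff, hg⟩
      exact SecondaryCone.concaveOn_of_detCond hfin hconv hpure hω hg haff
  obtain ⟨m, f, hf⟩ := SecondaryCone.exists_halfspaces K hfin
  rw [← hC] at hf
  refine ⟨hC, ?_, ?_, ?_, m, f, hf⟩
  · have : Finite ↥K.vertices := SecondaryCone.vertices_finite hfin
    rw [hf]
    exact isClosed_iInter fun i =>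
      isClosed_le (f i).continuous_of_finiteDimensional continuous_const
  · rw [hf]
    exact convex_iInter fun i => convex_halfSpace_le (f i).isLinear 0
  · intro c hc ω hω
    rw [hf, Set.mem_iInter] at hω ⊢
    intro i
    change f i (c • ω) ≤ 0
    rw [map_smul, smul_eq_mul]
    exact mul_nonpos_of_nonneg_of_nonpos hc (hω i)
end

section
/- Let K be a finite geometric simplicial complex in ℝ^d that is pure d-dimensional, with space Q = |K| and vertex set V, and let ω : V → ℝ. Then the Lebesgue integral of the piecewise-linear interpolant g_{K,ω} over Q equals (1/(d+1)) · Σ_σ vol(convexHull ℝ σ) · (Σ_{a ∈ σ} ω(a)), where the outer sum ranges over all faces σ of K with d+1 elements and vol denotes d-dimensional Lebesgue measure. -/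
open MeasureTheory

/-!
The heart of the matter is the case of one `d`-simplex `S` with vertices `b i`: every barycentric
coordinate has the same integral over `S`. Indeed the affine map exchanging two vertices `b i`,
`b j` and fixing the others is an involution, so it has determinant `±1` and preserves Lebesgue
measure; it also maps `S` onto itself and exchanges the two barycentric coordinates
(`setIntegral_coord_eq`). Since the coordinates sum to `1`, each has integral `vol S / (d + 1)`,
and an affine function is the combination of the coordinates weighted by its vertex values
(`setIntegral_affine_eq`).

By purity `|K|` is the union of its `d`-simplices, and two distinct ones meet in the convex hull
of at most `d` points, a null set (`volume_convexHull_eq_zero`), so the integral over `|K|` is the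
sum of the integrals over the `d`-simplices.
-/

section Simplex

variable {E ι : Type*} [NormedAddCommGroup E] [NormedSpace ℝ E]

/-- The affine map exchanging the points `b i` and `b j` of an affine basis and fixing the
others. -/
noncomputable def swapMap (b : AffineBasis ι ℝ E) (i j : ι) (x : E) : E :=
  x + (b.coord i x - b.coord j x) • (b j - b i)

lemma coord_swapMap [DecidableEq ι] (b : AffineBasis ι ℝ E) (i j k : ι) (x : E) :
    b.coord k (swapMap b i j x) = b.coord (Equiv.swap i j k) x := by
  have h1 : b.coord k (swapMap b i j x) =
      (b.coord i x - b.coord j x) * (b.coord k (b j) - b.coord k (b i)) + b.coord k x := by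
    have := (b.coord k).map_vadd x ((b.coord i x - b.coord j x) • (b j - b i))
    rw [map_smul, ← vsub_eq_sub (b j), AffineMap.linearMap_vsub] at this
    simpa [swapMap, add_comm] using this
  rw [h1]
  simp only [AffineBasis.coord_apply, Equiv.swap_apply_def]
  split_ifs <;> simp_all

/-- The linear part of `swapMap b i j`. -/
noncomputable def swapLinear (b : AffineBasis ι ℝ E) (i j : ι) : E →ₗ[ℝ] E :=
  LinearMap.id + ((b.coord i).linear - (b.coord j).linear).smulRight (b j - b i)

lemma swapLinear_sub (b : AffineBasis ι ℝ E) (i j : ι) (x y : E) :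
    swapLinear b i j (x - y) = swapMap b i j x - swapMap b i j y := by
  have h : ∀ k, (b.coord k).linear (x - y) = b.coord k x - b.coord k y := fun k =>
    AffineMap.linearMap_vsub _ _ _
  simp only [swapLinear, swapMap, LinearMap.add_apply, LinearMap.id_apply,
    LinearMap.smulRight_apply, LinearMap.sub_apply, h]
  module

variable [Fintype ι]

lemma swapMap_swapMap (b : AffineBasis ι ℝ E) (i j : ι) (x : E) :
    swapMap b i j (swapMap b i j x) = x := by
  classical
  refine b.ext_elem fun k => ?_
  simp [coord_swapMap]

lemma abs_det_swapLinear (b : AffineBasis ι ℝ E) (i j : ι) :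
    |LinearMap.det (swapLinear b i j)| = 1 := by
  have h : swapLinear b i j ∘ₗ swapLinear b i j = LinearMap.id := by
    ext x
    have := swapLinear_sub b i j x 0
    rw [sub_zero] at this
    simp [this, swapLinear_sub, swapMap_swapMap]
  have h2 := congrArg LinearMap.det h
  rw [LinearMap.det_comp, LinearMap.det_id] at h2
  rcases mul_self_eq_one_iff.1 h2 with h | h <;> simp [h]

lemma image_swapMap (b : AffineBasis ι ℝ E) (i j : ι) :
    swapMap b i j '' convexHull ℝ (Set.range b) = convexHull ℝ (Set.range b) := by
  classical
  have hmaps : ∀ x ∈ convexHull ℝ (Set.range b),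
      swapMap b i j x ∈ convexHull ℝ (Set.range b) := by
    intro x hx
    rw [b.convexHull_eq_nonneg_coord] at hx ⊢
    intro k
    rw [coord_swapMap]
    exact hx _
  refine Set.Subset.antisymm (Set.image_subset_iff.2 hmaps) fun x hx => ?_
  exact ⟨_, hmaps x hx, swapMap_swapMap b i j x⟩

variable [FiniteDimensional ℝ E] [MeasurableSpace E] [BorelSpace E]
  (μ : Measure E) [μ.IsAddHaarMeasure]

lemma setIntegral_coord_eq (b : AffineBasis ι ℝ E) (i j : ι) :
    ∫ x in convexHull ℝ (Set.range b), b.coord i x ∂μ =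
      ∫ x in convexHull ℝ (Set.range b), b.coord j x ∂μ := by
  classical
  have hderiv : ∀ x ∈ convexHull ℝ (Set.range b), HasFDerivWithinAt (swapMap b i j)
      (swapLinear b i j).toContinuousLinearMap (convexHull ℝ (Set.range b)) x := by
    intro x _
    have h : swapMap b i j =
        fun y => (swapLinear b i j).toContinuousLinearMap y + swapMap b i j 0 := by
      ext y
      have := swapLinear_sub b i j y 0
      rw [sub_zero] at this
      simp [this]
    rw [h]
    exact ((ContinuousLinearMap.hasFDerivAt _).add_const _).hasFDerivWithinAt
  have hinj : Set.InjOn (swapMap b i j) (convexHull ℝ (Set.range b)) :=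
    (Function.LeftInverse.injective (swapMap_swapMap b i j)).injOn
  have hmeas : MeasurableSet (convexHull ℝ (Set.range b)) :=
    ((Set.finite_range b).isClosed_convexHull ℝ).measurableSet
  have key := integral_image_eq_integral_abs_det_fderiv_smul μ hmeas hderiv hinj
    (fun x => b.coord i x)
  rw [image_swapMap] at key
  rw [key]
  simp [ContinuousLinearMap.det, abs_det_swapLinear, coord_swapMap]

lemma integrableOn_affine (σ : Set E) (hσ : σ.Finite) (h : E →ᵃ[ℝ] ℝ) :
    IntegrableOn h (convexHull ℝ σ) μ :=
  h.continuous_of_finiteDimensional.continuousOn.integrableOn_compact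
    (hσ.isCompact_convexHull ℝ)

lemma setIntegral_coord (b : AffineBasis ι ℝ E) (i : ι) :
    ∫ x in convexHull ℝ (Set.range b), b.coord i x ∂μ =
      μ.real (convexHull ℝ (Set.range b)) / Fintype.card ι := by
  have hsum : ∑ j, ∫ x in convexHull ℝ (Set.range b), b.coord j x ∂μ =
      μ.real (convexHull ℝ (Set.range b)) := by
    rw [← integral_finsetSum _ fun j _ => integrableOn_affine μ _ (Set.finite_range b) (b.coord j)]
    simp
  simp only [setIntegral_coord_eq μ b _ i, Finset.sum_const, Finset.card_univ,
    nsmul_eq_mul] at hsum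
  have : Nonempty ι := ⟨i⟩
  rw [← hsum]
  field_simp

/-- The mean of an affine function over a simplex is the mean of its vertex values. -/
lemma setIntegral_affine_eq (b : AffineBasis ι ℝ E) (h : E →ᵃ[ℝ] ℝ) :
    ∫ x in convexHull ℝ (Set.range b), h x ∂μ =
      1 / (Fintype.card ι : ℝ) * (μ.real (convexHull ℝ (Set.range b)) * ∑ i, h (b i)) := by
  have hx : ∀ x, h x = ∑ i, b.coord i x * h (b i) := by
    intro x
    conv_lhs => rw [← b.affineCombination_coord_eq_self x]
    rw [Finset.map_affineCombination _ _ _ (b.sum_coord_apply_eq_one x),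
      Finset.affineCombination_eq_linear_combination _ _ _ (b.sum_coord_apply_eq_one x)]
    simp
  rw [integral_congr_ae (Filter.Eventually.of_forall hx), integral_finsetSum _ fun i _ =>
    (integrableOn_affine μ _ (Set.finite_range b) (b.coord i)).mul_const _]
  simp only [integral_mul_const, setIntegral_coord]
  rw [← Finset.mul_sum]
  ring

end Simplex

lemma volume_convexHull_eq_zero {d : ℕ} (s : Finset (Fin d → ℝ))
    (hs : AffineIndependent ℝ ((↑) : s → Fin d → ℝ)) (hcard : s.card ≠ d + 1) :
    volume (convexHull ℝ (s : Set (Fin d → ℝ))) = 0 := by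
  refine measure_mono_null (convexHull_subset_affineSpan _)
    (Measure.addHaar_affineSubspace volume _ fun htop => hcard ?_)
  have := hs.affineSpan_eq_top_iff_card_eq_finrank_add_one
  simp only [Subtype.range_coe_subtype, Fintype.card_coe, Module.finrank_fin_fun] at this
  exact this.1 htop

lemma setIntegral_affine_face {d : ℕ} (s : Finset (Fin d → ℝ))
    (hs : AffineIndependent ℝ ((↑) : s → Fin d → ℝ)) (hcard : s.card = d + 1)
    (h : (Fin d → ℝ) →ᵃ[ℝ] ℝ) :
    ∫ x in convexHull ℝ (s : Set (Fin d → ℝ)), h x =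
      1 / (d + 1 : ℝ) *
        ((volume (convexHull ℝ (s : Set (Fin d → ℝ)))).toReal * ∑ a ∈ s, h a) := by
  have htop : affineSpan ℝ (Set.range ((↑) : s → Fin d → ℝ)) = ⊤ := by
    rw [hs.affineSpan_eq_top_iff_card_eq_finrank_add_one]
    simpa using hcard
  let b : AffineBasis s ℝ (Fin d → ℝ) := ⟨_, hs, htop⟩
  have hb : ∀ a, b a = (a : Fin d → ℝ) := fun _ => rfl
  have hr : Set.range b = (s : Set (Fin d → ℝ)) := Subtype.range_coe
  have key := setIntegral_affine_eq volume b h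
  rw [hr] at key
  simp only [hb, Fintype.card_coe, hcard, Nat.cast_add, Nat.cast_one, measureReal_def] at key
  rw [key, Finset.sum_coe_sort s h]

/-- For a finite, pure `d`-dimensional geometric simplicial complex `K`
in `ℝ^d` with vertex weights `ω`, the integral of the piecewise-linear interpolant
`g = g_{K,ω}` over `Q = |K|` equals
`(1/(d+1)) · Σ_{σ : σ ∈ K.faces, |σ| = d+1} vol(convexHull ℝ σ) · Σ_{a ∈ σ} ω a`. -/
theorem stmt7 (d : ℕ) (K : Geometry.SimplicialComplex ℝ (Fin d → ℝ))
    (hfin : K.faces.Finite)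
    (hpure : ∀ σ ∈ K.faces, ∃ τ ∈ K.faces, σ ⊆ τ ∧ τ.card = d + 1)
    (ω : (Fin d → ℝ) → ℝ) (g : (Fin d → ℝ) → ℝ)
    (hg : ∀ σ ∈ K.faces, ∃ h : (Fin d → ℝ) →ᵃ[ℝ] ℝ,
      ∀ x ∈ convexHull ℝ (σ : Set (Fin d → ℝ)), g x = h x)
    (hgω : ∀ v ∈ K.vertices, g v = ω v) :
    ∫ x in K.space, g x =
      (1 / (d + 1 : ℝ)) *
        ∑ σ ∈ hfin.toFinset.filter (fun σ => σ.card = d + 1),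
          (volume (convexHull ℝ (σ : Set (Fin d → ℝ)))).toReal * ∑ a ∈ σ, ω a := by
  classical
  set F := hfin.toFinset.filter (fun σ => σ.card = d + 1) with hF
  have hmem : ∀ {σ}, σ ∈ F ↔ σ ∈ K.faces ∧ σ.card = d + 1 := by simp [hF]
  have hspace : K.space = ⋃ σ : F, convexHull ℝ ((σ : Finset (Fin d → ℝ)) : Set (Fin d → ℝ)) := by
    ext x
    rw [Geometry.SimplicialComplex.mem_space_iff, Set.mem_iUnion]
    constructor
    · rintro ⟨σ, hσ, hx⟩
      obtain ⟨τ, hτ, hsub, hc⟩ := hpure σ hσ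
      exact ⟨⟨τ, hmem.2 ⟨hτ, hc⟩⟩, convexHull_mono (by exact_mod_cast hsub) hx⟩
    · rintro ⟨⟨σ, hσ⟩, hx⟩
      exact ⟨σ, (hmem.1 hσ).1, hx⟩
  have hmeas : ∀ σ : Finset (Fin d → ℝ),
      MeasurableSet (convexHull ℝ (σ : Set (Fin d → ℝ))) := fun σ =>
    (σ.finite_toSet.isClosed_convexHull ℝ).measurableSet
  have hdisj : Pairwise (Function.onFun (AEDisjoint volume) fun σ : F =>
      convexHull ℝ ((σ : Finset (Fin d → ℝ)) : Set (Fin d → ℝ))) := by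
    rintro ⟨s, hs⟩ ⟨t, ht⟩ hne
    have hne : s ≠ t := fun h => hne (Subtype.ext h)
    obtain ⟨hsK, hsc⟩ := hmem.1 hs
    obtain ⟨htK, htc⟩ := hmem.1 ht
    change volume (convexHull ℝ (s : Set (Fin d → ℝ)) ∩ convexHull ℝ (t : Set (Fin d → ℝ))) = 0
    rw [K.convexHull_inter_convexHull hsK htK, ← Finset.coe_inter]
    refine volume_convexHull_eq_zero _
      ((K.indep hsK).mono (s := ((s ∩ t : Finset (Fin d → ℝ)) : Set (Fin d → ℝ)))
        (by exact_mod_cast Finset.inter_subset_left)) fun hc => hne ?_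
    have h1 := Finset.eq_of_subset_of_card_le (Finset.inter_subset_left : s ∩ t ⊆ s) (by omega)
    have h2 := Finset.eq_of_subset_of_card_le (Finset.inter_subset_right : s ∩ t ⊆ t) (by omega)
    exact h1.symm.trans h2
  have hint : IntegrableOn g
      (⋃ σ : F, convexHull ℝ ((σ : Finset (Fin d → ℝ)) : Set (Fin d → ℝ))) := by
    rw [integrableOn_finite_iUnion]
    rintro ⟨σ, hσ⟩
    obtain ⟨h, hh⟩ := hg σ (hmem.1 hσ).1
    exact (integrableOn_affine volume _ σ.finite_toSet h).congr_fun
      (fun x hx => (hh x hx).symm) (hmeas σ)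
  rw [hspace, integral_iUnion_ae (fun σ : F => (hmeas σ).nullMeasurableSet) hdisj hint, tsum_fintype,
    Finset.sum_coe_sort F fun σ => ∫ x in convexHull ℝ (σ : Set (Fin d → ℝ)), g x, Finset.mul_sum]
  refine Finset.sum_congr rfl fun σ hσ => ?_
  obtain ⟨hσK, hc⟩ := hmem.1 hσ
  obtain ⟨h, hh⟩ := hg σ hσK
  rw [setIntegral_congr_fun (hmeas σ) hh, setIntegral_affine_face σ (K.indep hσK) hc h]
  congr 2
  refine Finset.sum_congr rfl fun a ha => ?_
  have hv : a ∈ K.vertices :=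
    K.down_closed hσK (Finset.singleton_subset_iff.2 ha) (Finset.singleton_nonempty a)
  rw [← hgω a hv, hh a (subset_convexHull ℝ _ ha)]
end

section
/- Let v, w ∈ L⁺ be linearly independent. Then there is a unique point p ∈ H lying in the linear span of {v, w} with ⟨p, v⟩ = −1, and a unique point q ∈ H lying in the linear span of {v, w} with ⟨q, w⟩ = −1; explicitly p = (1/2)v + (1/(2λ²))w and q = (1/(2λ²))v + (1/2)w, where λ = λ(v,w). Moreover −⟨p, q⟩ = (λ² + λ^{−2})/2, i.e., −⟨p,q⟩ = cosh(2 log λ), so that the λ-length satisfies λ(v,w) = e^{ℓ/2} where ℓ = 2 log λ is the signed distance between the horocycles h(v) and h(w) measured along the geodesic H ∩ span{v,w}. -/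
/-!
On `span {v, w}` with `v, w` null, the form is determined by the single number `⟨v, w⟩`:
`⟨a v + b w, c v + d w⟩ = (a d + b c) ⟨v, w⟩` (`mink_comb`). Linear independence of two
future-pointing null vectors gives `⟨v, w⟩ < 0` (`mink_neg`), so `λ² = -⟨v, w⟩ / 2 > 0`.
For `a v + b w`, the condition `⟨·, v⟩ = -1` then fixes `b = 1 / (2 λ²)` and the norm condition
fixes `a = 1 / 2`; the point `q` is the same statement with `v` and `w` exchanged. The remaining
identities are evaluations of `mink_comb` and of `cosh` at a logarithm.
-/

/-- The Minkowski bilinear form on `ℝ³`. -/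
def mink (v w : Fin 3 → ℝ) : ℝ := v 0 * w 0 + v 1 * w 1 - v 2 * w 2

theorem mink_comm (v w : Fin 3 → ℝ) : mink v w = mink w v := by
  unfold mink; ring

theorem mink_comb {v w : Fin 3 → ℝ} (hv : mink v v = 0) (hw : mink w w = 0) (a b c d : ℝ) :
    mink (a • v + b • w) (c • v + d • w) = (a * d + b * c) * mink v w := by
  simp only [mink, Pi.add_apply, Pi.smul_apply, smul_eq_mul] at *
  linear_combination a * c * hv + b * d * hw

/-- Reversed Cauchy–Schwarz for null vectors: rescaling `v` and `w` to the same height, the squared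
Euclidean length of their difference is `-2 v₂ w₂ ⟨v, w⟩`, so `⟨v, w⟩ ≥ 0` would make them
proportional. -/
theorem mink_neg {v w : Fin 3 → ℝ} (hv : mink v v = 0 ∧ 0 < v 2) (hw : mink w w = 0 ∧ 0 < w 2)
    (hind : LinearIndependent ℝ ![v, w]) : mink v w < 0 := by
  obtain ⟨hv, hv2⟩ := hv
  obtain ⟨hw, hw2⟩ := hw
  by_contra! hm
  have key : (w 2 * v 0 - v 2 * w 0) ^ 2 + (w 2 * v 1 - v 2 * w 1) ^ 2
      = -(2 * (v 2 * w 2) * mink v w) := by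
    unfold mink at *
    linear_combination w 2 ^ 2 * hv + v 2 ^ 2 * hw
  have hnn : 0 ≤ 2 * (v 2 * w 2) * mink v w := by positivity
  have h0 : w 2 * v 0 - v 2 * w 0 = 0 := by
    apply pow_eq_zero_iff (two_ne_zero) |>.1
    nlinarith [sq_nonneg (w 2 * v 0 - v 2 * w 0), sq_nonneg (w 2 * v 1 - v 2 * w 1)]
  have h1 : w 2 * v 1 - v 2 * w 1 = 0 := by
    apply pow_eq_zero_iff (two_ne_zero) |>.1
    nlinarith [sq_nonneg (w 2 * v 0 - v 2 * w 0), sq_nonneg (w 2 * v 1 - v 2 * w 1)]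
  have hz : w 2 • v + (-v 2) • w = 0 := by
    ext i
    fin_cases i <;> simp only [Pi.add_apply, Pi.smul_apply, smul_eq_mul, Pi.zero_apply]
    · simpa [sub_eq_add_neg] using h0
    · simpa [sub_eq_add_neg] using h1
    · simp; ring
  exact hw2.ne' (LinearIndependent.pair_iff.1 hind _ _ hz).1

/-- Existence and uniqueness of the point of `H ∩ span {v, w}` on the horocycle of `v`, with
`L = λ²` as parameter. -/
theorem horo_point {v w : Fin 3 → ℝ} (hv : mink v v = 0 ∧ 0 < v 2)
    (hw : mink w w = 0 ∧ 0 < w 2) {L : ℝ} (hL : 0 < L) (hm : mink v w = -(2 * L)) :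
    let p : Fin 3 → ℝ := (1 / 2 : ℝ) • v + (1 / (2 * L)) • w
    (p ∈ Submodule.span ℝ ({v, w} : Set (Fin 3 → ℝ)) ∧
        mink p p = -1 ∧ 0 < p 2 ∧ mink p v = -1) ∧
      (∀ p' : Fin 3 → ℝ, p' ∈ Submodule.span ℝ ({v, w} : Set (Fin 3 → ℝ)) →
        mink p' p' = -1 → 0 < p' 2 → mink p' v = -1 → p' = p) := by
  obtain ⟨hv, hv2⟩ := hv
  obtain ⟨hw, hw2⟩ := hw
  have hpv (a b : ℝ) : mink (a • v + b • w) v = b * mink v w := by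
    simpa using mink_comb hv hw a b 1 0
  intro p
  refine ⟨⟨Submodule.mem_span_pair.2 ⟨_, _, rfl⟩, ?_, ?_, ?_⟩, ?_⟩
  · rw [mink_comb hv hw, hm]; field_simp; norm_num
  · simp only [p, Pi.add_apply, Pi.smul_apply, smul_eq_mul]; positivity
  · rw [hpv, hm]; field_simp
  · intro p' hp' hpp _ hpv'
    obtain ⟨a, b, rfl⟩ := Submodule.mem_span_pair.1 hp'
    rw [hpv, hm] at hpv'
    rw [mink_comb hv hw, hm] at hpp
    have ha : a = 1 / 2 := by linear_combination (-1 / 2) * hpp + a * hpv'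
    have hb : b = 1 / (2 * L) := by
      rw [eq_div_iff (by positivity)]; linear_combination -hpv'
    rw [ha, hb]

/-- For linearly independent `v, w ∈ L⁺`, there is a unique point
`p ∈ H ∩ span{v,w}` with `⟨p,v⟩ = −1`, and a unique `q ∈ H ∩ span{v,w}` with
`⟨q,w⟩ = −1`; explicitly `p = (1/2)v + (1/(2λ²))w` and `q = (1/(2λ²))v + (1/2)w` where
`λ = λ(v,w)`. Moreover `−⟨p,q⟩ = (λ² + λ⁻²)/2 = cosh(2 log λ)`, so `λ = e^{ℓ/2}` with
`ℓ = 2 log λ` the signed distance between the horocycles `h(v)` and `h(w)`. -/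
theorem stmt10 (v w : Fin 3 → ℝ)
    (hv : mink v v = 0 ∧ 0 < v 2) (hw : mink w w = 0 ∧ 0 < w 2)
    (hind : LinearIndependent ℝ ![v, w]) :
    let lam : ℝ := Real.sqrt (-(mink v w) / 2)
    let p : Fin 3 → ℝ := (1 / 2 : ℝ) • v + (1 / (2 * lam ^ 2)) • w
    let q : Fin 3 → ℝ := (1 / (2 * lam ^ 2)) • v + (1 / 2 : ℝ) • w
    (p ∈ Submodule.span ℝ ({v, w} : Set (Fin 3 → ℝ)) ∧
        mink p p = -1 ∧ 0 < p 2 ∧ mink p v = -1) ∧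
      (∀ p' : Fin 3 → ℝ, p' ∈ Submodule.span ℝ ({v, w} : Set (Fin 3 → ℝ)) →
        mink p' p' = -1 → 0 < p' 2 → mink p' v = -1 → p' = p) ∧
      (q ∈ Submodule.span ℝ ({v, w} : Set (Fin 3 → ℝ)) ∧
        mink q q = -1 ∧ 0 < q 2 ∧ mink q w = -1) ∧
      (∀ q' : Fin 3 → ℝ, q' ∈ Submodule.span ℝ ({v, w} : Set (Fin 3 → ℝ)) →
        mink q' q' = -1 → 0 < q' 2 → mink q' w = -1 → q' = q) ∧
      -(mink p q) = (lam ^ 2 + (lam⁻¹) ^ 2) / 2 ∧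
      -(mink p q) = Real.cosh (2 * Real.log lam) ∧
      lam = Real.exp ((2 * Real.log lam) / 2) := by
  intro lam p q
  have hneg := mink_neg hv hw hind
  have hlam : 0 < lam := Real.sqrt_pos.2 (by linarith)
  have hsq : lam ^ 2 = -(mink v w) / 2 := Real.sq_sqrt (by linarith)
  have hm : mink v w = -(2 * lam ^ 2) := by rw [hsq]; ring
  have hL : 0 < lam ^ 2 := by positivity
  have hP := horo_point hv hw hL hm
  have hQ := horo_point hw hv hL ((mink_comm w v).trans hm)
  have hq : (1 / 2 : ℝ) • w + (1 / (2 * lam ^ 2)) • v = q := add_comm _ _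
  rw [Set.pair_comm w v, hq] at hQ
  have hpq : -(mink p q) = (lam ^ 2 + (lam⁻¹) ^ 2) / 2 := by
    rw [mink_comb hv.1 hw.1, hm]; field_simp
  refine ⟨hP.1, hP.2, hQ.1, hQ.2, hpq, ?_, ?_⟩
  · have h2 : 2 * Real.log lam = Real.log (lam ^ 2) := by simp
    rw [hpq, h2, Real.cosh_log hL, inv_pow]
  · rw [mul_div_cancel_left₀ _ two_ne_zero, Real.exp_log hlam]
end

section
/- Let v, w ∈ L⁺ be linearly independent. Then the horocycles h(v) and h(w) intersect if and only if −⟨v,w⟩ ≤ 2 (equivalently, λ(v,w) ≤ 1); more precisely, h(v) ∩ h(w) is empty if −⟨v,w⟩ > 2, consists of exactly one point if −⟨v,w⟩ = 2, and consists of exactly two points if 0 < −⟨v,w⟩ < 2. (The signed distance between the two horocycles is negative exactly when they intersect transversally.) -/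
/-- The cross product of Minkowski 3-space: the Euclidean cross product with its last
coordinate negated, so that it is `mink`-orthogonal to both factors. -/
def lorentzCross (v w : Fin 3 → ℝ) : Fin 3 → ℝ :=
  ![v 1 * w 2 - v 2 * w 1, v 2 * w 0 - v 0 * w 2, -(v 0 * w 1 - v 1 * w 0)]

lemma mink_lorentzCross_self (v w : Fin 3 → ℝ) :
    mink (lorentzCross v w) (lorentzCross v w) = mink v w ^ 2 - mink v v * mink w w := by
  simp [mink, lorentzCross]; ring

/-- Expansion of `x` in the (possibly degenerate) system `v, w, lorentzCross v w`, with
denominators cleared. -/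
lemma lorentzCross_expansion (v w x : Fin 3 → ℝ) (i : Fin 3) :
    (mink v w ^ 2 - mink v v * mink w w) * x i =
      mink x (lorentzCross v w) * lorentzCross v w i
        + (mink x w * mink v w - mink x v * mink w w) * v i
        + (mink x v * mink v w - mink x w * mink v v) * w i := by
  fin_cases i <;> simp [mink, lorentzCross] <;> ring

/-- Two independent vectors of the positive light cone have negative product, because
`‖w₂ v - v₂ w‖² = -2 v₂ w₂ ⟨v,w⟩` (Euclidean norm). -/
lemma neg_mink_pos (v w : Fin 3 → ℝ)
    (hv : mink v v = 0 ∧ 0 < v 2) (hw : mink w w = 0 ∧ 0 < w 2)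
    (hind : LinearIndependent ℝ ![v, w]) : 0 < -(mink v w) := by
  obtain ⟨hv0, hv2⟩ := hv
  obtain ⟨hw0, hw2⟩ := hw
  have key : (w 2 * v 0 - v 2 * w 0) ^ 2 + (w 2 * v 1 - v 2 * w 1) ^ 2
      = 2 * (v 2 * w 2) * -(mink v w) := by
    simp only [mink] at *
    linear_combination (w 2) ^ 2 * hv0 + (v 2) ^ 2 * hw0
  have hvw := mul_pos hv2 hw2
  by_contra hneg
  have hle : 2 * (v 2 * w 2) * -(mink v w) ≤ 0 :=
    mul_nonpos_of_nonneg_of_nonpos (by positivity) (not_lt.mp hneg)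
  have h0 : w 2 * v 0 - v 2 * w 0 = 0 := by
    apply pow_eq_zero_iff (two_ne_zero) |>.mp
    nlinarith [sq_nonneg (w 2 * v 0 - v 2 * w 0), sq_nonneg (w 2 * v 1 - v 2 * w 1)]
  have h1 : w 2 * v 1 - v 2 * w 1 = 0 := by
    apply pow_eq_zero_iff (two_ne_zero) |>.mp
    nlinarith [sq_nonneg (w 2 * v 0 - v 2 * w 0), sq_nonneg (w 2 * v 1 - v 2 * w 1)]
  have := LinearIndependent.pair_iff.mp hind (w 2) (-(v 2)) (by
    ext i
    fin_cases i <;> simp <;> linarith)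
  exact hw2.ne' this.1

/-- A timelike vector with negative product against a vector of the positive light cone is
future-directed. -/
lemma pos_of_mink_neg (v x : Fin 3 → ℝ) (hv : mink v v = 0 ∧ 0 < v 2)
    (hx : mink x x = -1) (hxv : mink x v = -1) : 0 < x 2 := by
  obtain ⟨hv0, hv2⟩ := hv
  simp only [mink] at *
  by_contra hneg
  have h1 : 0 ≤ -(x 2 * v 2) := by nlinarith
  -- Cauchy–Schwarz for the spatial parts contradicts `x₀v₀ + x₁v₁ = -1 - |x₂|v₂`.
  have hcs : (x 0 * v 0 + x 1 * v 1) ^ 2 ≤ (x 0 ^ 2 + x 1 ^ 2) * (v 0 ^ 2 + v 1 ^ 2) := by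
    nlinarith [sq_nonneg (x 0 * v 1 - x 1 * v 0)]
  have e1 : x 0 ^ 2 + x 1 ^ 2 = x 2 ^ 2 - 1 := by linarith
  have e2 : v 0 ^ 2 + v 1 ^ 2 = v 2 ^ 2 := by linarith
  have e3 : x 0 * v 0 + x 1 * v 1 = -1 + x 2 * v 2 := by linarith
  rw [e1, e2, e3] at hcs
  nlinarith [sq_nonneg (v 2)]

lemma mem_horocycles_iff (v w : Fin 3 → ℝ)
    (hv : mink v v = 0 ∧ 0 < v 2) (hw : mink w w = 0 ∧ 0 < w 2)
    (hp : 0 < -(mink v w)) (x : Fin 3 → ℝ) :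
    ((mink x x = -1 ∧ 0 < x 2) ∧ mink x v = -1 ∧ mink x w = -1) ↔
      ∃ t : ℝ, t ^ 2 * (-(mink v w)) ^ 3 = 2 - -(mink v w) ∧
        x = (-(mink v w))⁻¹ • (v + w) + t • lorentzCross v w := by
  obtain ⟨p, hpdef⟩ : ∃ p, p = -(mink v w) := ⟨_, rfl⟩
  have hvw : mink v w = -p := by linarith
  rw [← hpdef] at hp ⊢
  have hp0 : p ≠ 0 := hp.ne'
  have huu := mink_lorentzCross_self v w
  rw [hvw, hv.1, hw.1] at huu
  have hline : ∀ t : ℝ, mink (p⁻¹ • (v + w) + t • lorentzCross v w)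
      (p⁻¹ • (v + w) + t • lorentzCross v w) = -2 / p + t ^ 2 * p ^ 2 := by
    intro t
    have : mink (p⁻¹ • (v + w) + t • lorentzCross v w)
        (p⁻¹ • (v + w) + t • lorentzCross v w)
        = p⁻¹ ^ 2 * (mink v v + 2 * mink v w + mink w w)
          + t ^ 2 * mink (lorentzCross v w) (lorentzCross v w) := by
      simp [mink, lorentzCross]; ring
    rw [this, huu, hvw, hv.1, hw.1]
    field_simp
    ring
  have hquad : ∀ t : ℝ, -2 / p + t ^ 2 * p ^ 2 = -1 ↔ t ^ 2 * p ^ 3 = 2 - p := by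
    intro t
    field_simp
    constructor <;> intro h <;> linarith
  constructor
  · rintro ⟨⟨hxx, -⟩, hxv, hxw⟩
    have hx : x = p⁻¹ • (v + w)
        + (mink x (lorentzCross v w) / p ^ 2) • lorentzCross v w := by
      ext i
      have h := lorentzCross_expansion v w x i
      rw [hvw, hv.1, hw.1, hxv, hxw] at h
      simp only [Pi.add_apply, Pi.smul_apply, smul_eq_mul]
      field_simp
      linarith
    refine ⟨_, ?_, hx⟩
    rw [hx, hline] at hxx
    exact (hquad _).mp hxx
  · rintro ⟨t, ht, rfl⟩
    have hxx := (hline t).trans ((hquad t).mpr ht)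
    have hxv : mink (p⁻¹ • (v + w) + t • lorentzCross v w) v = -1 := by
      have : mink (p⁻¹ • (v + w) + t • lorentzCross v w) v
          = p⁻¹ * (mink v v + mink v w) := by
        simp [mink, lorentzCross]; ring
      rw [this, hvw, hv.1]
      field_simp
      ring
    have hxw : mink (p⁻¹ • (v + w) + t • lorentzCross v w) w = -1 := by
      have : mink (p⁻¹ • (v + w) + t • lorentzCross v w) w
          = p⁻¹ * (mink v w + mink w w) := by
        simp [mink, lorentzCross]; ring
      rw [this, hvw, hw.1]
      field_simp
      ring
    exact ⟨⟨hxx, pos_of_mink_neg v _ hv hxx hxv⟩, hxv, hxw⟩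

/-- For linearly independent `v, w ∈ L⁺`, the horocycles `h(v)` and
`h(w)` intersect iff `−⟨v,w⟩ ≤ 2` (equivalently `λ(v,w) ≤ 1`); more precisely their
intersection is empty if `−⟨v,w⟩ > 2`, a single point if `−⟨v,w⟩ = 2`, and exactly two
points if `0 < −⟨v,w⟩ < 2`. -/
theorem stmt11 (v w : Fin 3 → ℝ)
    (hv : mink v v = 0 ∧ 0 < v 2) (hw : mink w w = 0 ∧ 0 < w 2)
    (hind : LinearIndependent ℝ ![v, w]) :
    let S : Set (Fin 3 → ℝ) :=
      {x | (mink x x = -1 ∧ 0 < x 2) ∧ mink x v = -1 ∧ mink x w = -1}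
    (S.Nonempty ↔ -(mink v w) ≤ 2) ∧
      (S.Nonempty ↔ Real.sqrt (-(mink v w) / 2) ≤ 1) ∧
      (2 < -(mink v w) → S = ∅) ∧
      (-(mink v w) = 2 → ∃ x, S = {x}) ∧
      (0 < -(mink v w) ∧ -(mink v w) < 2 → ∃ x y, x ≠ y ∧ S = {x, y}) := by
  intro S
  have hp := neg_mink_pos v w hv hw hind
  have hS : ∀ x, x ∈ S ↔ _ := mem_horocycles_iff v w hv hw hp
  have hu : lorentzCross v w ≠ 0 := by
    intro h
    have huu := mink_lorentzCross_self v w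
    rw [h, hv.1] at huu
    simp [mink] at huu
    simp only [mink] at hp
    nlinarith
  generalize -(mink v w) = p at *
  have hp3 : 0 < p ^ 3 := by positivity
  have hne : S.Nonempty ↔ p ≤ 2 := by
    constructor
    · rintro ⟨x, hx⟩
      obtain ⟨t, ht, -⟩ := (hS x).mp hx
      have : 0 ≤ t ^ 2 * p ^ 3 := by positivity
      linarith
    · intro h
      refine ⟨_, (hS _).mpr ⟨√((2 - p) / p ^ 3), ?_, rfl⟩⟩
      rw [Real.sq_sqrt (div_nonneg (by linarith) hp3.le)]
      field_simp
  refine ⟨hne, hne.trans ?_, ?_, ?_, ?_⟩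
  · rw [Real.sqrt_le_iff, one_pow]
    exact ⟨fun h => ⟨zero_le_one, by linarith⟩, fun h => by linarith [h.2]⟩
  · intro h
    rw [← Set.not_nonempty_iff_eq_empty, hne]
    linarith
  · intro h
    refine ⟨p⁻¹ • (v + w), Set.ext fun x => ?_⟩
    rw [hS, Set.mem_singleton_iff]
    constructor
    · rintro ⟨t, ht, rfl⟩
      have : t = 0 := by
        rw [h, sub_self] at ht
        simpa using ht
      simp [this]
    · rintro rfl
      exact ⟨0, by simp [h], by simp⟩
  · rintro ⟨-, h⟩
    obtain ⟨s, hs, hsq⟩ : ∃ s : ℝ, 0 < s ∧ s ^ 2 * p ^ 3 = 2 - p := by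
      have hq : 0 < (2 - p) / p ^ 3 := div_pos (by linarith) hp3
      refine ⟨√((2 - p) / p ^ 3), Real.sqrt_pos.mpr hq, ?_⟩
      rw [Real.sq_sqrt hq.le]
      field_simp
    refine ⟨p⁻¹ • (v + w) + s • lorentzCross v w,
      p⁻¹ • (v + w) + (-s) • lorentzCross v w, ?_, Set.ext fun x => ?_⟩
    · intro heq
      have := smul_left_injective ℝ hu (add_left_cancel heq)
      linarith
    · rw [hS, Set.mem_insert_iff, Set.mem_singleton_iff]
      constructor
      · rintro ⟨t, ht, rfl⟩
        have : t ^ 2 = s ^ 2 := mul_right_cancel₀ hp3.ne' (ht.trans hsq.symm)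
        rcases sq_eq_sq_iff_eq_or_eq_neg.mp this with rfl | rfl
        · exact Or.inl rfl
        · exact Or.inr rfl
      · rintro (rfl | rfl)
        · exact ⟨s, hsq, rfl⟩
        · exact ⟨-s, by rw [neg_sq]; exact hsq, rfl⟩
end

section
/- (Ptolemy relation for λ-lengths.) Let θ₁ < θ₂ < θ₃ < θ₄ < θ₁ + 2π be real numbers and r₁, r₂, r₃, r₄ > 0, and set v_i = r_i · (cos θ_i, sin θ_i, 1) ∈ L⁺ for i = 1,2,3,4 (so v₁, v₂, v₃, v₄ are points of the positive light cone whose ideal points lie in cyclic order, the vertices of a decorated ideal quadrilateral). Then λ(v₁,v₃) · λ(v₂,v₄) = λ(v₁,v₂) · λ(v₃,v₄) + λ(v₂,v₃) · λ(v₁,v₄); that is, the product of the λ-lengths of the two diagonals equals the sum of the products of the λ-lengths of opposite sides. -/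
/-!
The λ-length of `a(cos α, sin α, 1)` and `b(cos β, sin β, 1)` is `√a √b sin ((β - α) / 2)` when
`α ≤ β ≤ α + 2π` (`sqrt_neg_form_half`). Hence the radii contribute the common factor
`√r₁ √r₂ √r₃ √r₄` to every term, and what remains is Ptolemy's identity for the sines of half the
angle differences. Since `sin (y - x)` is the determinant of the unit vectors at angles `x` and
`y`, that identity is the three-term Plücker relation, a polynomial identity in the sines and
cosines.
-/

/-- The λ-length of two points of the light cone in polar form. The bounds on the angles make the
half-angle sine nonnegative, so that it is the correct branch of the square root. -/
lemma sqrt_neg_form_half {a b α β : ℝ} (ha : 0 ≤ a) (hb : 0 ≤ b) (h : α ≤ β)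
    (h' : β ≤ α + 2 * Real.pi) :
    Real.sqrt (-(a * Real.cos α * (b * Real.cos β) + a * Real.sin α * (b * Real.sin β) - a * b) / 2)
      = Real.sqrt a * Real.sqrt b * Real.sin (β / 2 - α / 2) := by
  have hs : 0 ≤ Real.sin (β / 2 - α / 2) :=
    Real.sin_nonneg_of_nonneg_of_le_pi (by linarith) (by linarith)
  have hsq : Real.sin (β / 2 - α / 2) ^ 2
      = (1 - (Real.cos β * Real.cos α + Real.sin β * Real.sin α)) / 2 := by
    rw [Real.sin_sq_eq_half_sub, show 2 * (β / 2 - α / 2) = β - α by ring, Real.cos_sub]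
    ring
  rw [← Real.sqrt_sq (mul_nonneg (by positivity) hs), mul_pow, mul_pow, Real.sq_sqrt ha,
    Real.sq_sqrt hb, hsq]
  congr 1
  ring

/-- **Ptolemy relation for λ-lengths.** For `θ₁ < θ₂ < θ₃ < θ₄ < θ₁ + 2π`
and `r₁, r₂, r₃, r₄ > 0`, the points `vᵢ = rᵢ(cos θᵢ, sin θᵢ, 1)` of the positive light
cone satisfy `λ(v₁,v₃)·λ(v₂,v₄) = λ(v₁,v₂)·λ(v₃,v₄) + λ(v₂,v₃)·λ(v₁,v₄)`. -/
theorem stmt12 (θ r : Fin 4 → ℝ)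
    (hθ : θ 0 < θ 1 ∧ θ 1 < θ 2 ∧ θ 2 < θ 3 ∧ θ 3 < θ 0 + 2 * Real.pi)
    (hr : ∀ i, 0 < r i) :
    let v : Fin 4 → Fin 3 → ℝ := fun i => r i • ![Real.cos (θ i), Real.sin (θ i), 1]
    let lam : (Fin 3 → ℝ) → (Fin 3 → ℝ) → ℝ := fun x y =>
      Real.sqrt (-(x 0 * y 0 + x 1 * y 1 - x 2 * y 2) / 2)
    lam (v 0) (v 2) * lam (v 1) (v 3) =
      lam (v 0) (v 1) * lam (v 2) (v 3) + lam (v 1) (v 2) * lam (v 0) (v 3) := by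
  intro v lam
  obtain ⟨h01, h12, h23, h30⟩ := hθ
  have key : ∀ i j, θ i ≤ θ j → θ j ≤ θ i + 2 * Real.pi → lam (v i) (v j)
      = Real.sqrt (r i) * Real.sqrt (r j) * Real.sin (θ j / 2 - θ i / 2) := by
    intro i j h h'
    rw [← sqrt_neg_form_half (hr i).le (hr j).le h h']
    simp [lam, v]
  rw [key 0 2 (by linarith) (by linarith), key 1 3 (by linarith) (by linarith),
    key 0 1 (by linarith) (by linarith), key 2 3 (by linarith) (by linarith),
    key 1 2 (by linarith) (by linarith), key 0 3 (by linarith) (by linarith)]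
  -- After expansion the identity is the Plücker relation.
  simp only [Real.sin_sub]
  ring
end

section
/- The map τ(x) = (x₁/x₃, x₂/x₃, 1/x₃) is an involution of the open half-space {x ∈ ℝ³ : x₃ > 0} (i.e., τ(τ(x)) = x whenever x₃ > 0); it maps the upper hyperboloid H bijectively onto the open upper unit hemisphere N = {x ∈ ℝ³ : x₁² + x₂² + x₃² = 1, x₃ > 0}, and it maps the positive light cone L⁺ bijectively onto the open upper half-cylinder L⁺_N = {x ∈ ℝ³ : x₁² + x₂² = 1, x₃ > 0}. -/
/-!
The map `tau` is its own inverse on the half-space `x 2 > 0`, so each bijectivity claim reduces to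
two inclusions (`bijOn_tau`): `tau` sends the source into the target and the target into the source.
Both follow by multiplying or dividing the defining equation by `(x 2) ^ 2`.
-/

/-- The projective transformation from the hyperboloid model to the hemisphere model. -/
noncomputable def tau (x : Fin 3 → ℝ) : Fin 3 → ℝ := ![x 0 / x 2, x 1 / x 2, 1 / x 2]

theorem tau_two_pos {x : Fin 3 → ℝ} (hx : 0 < x 2) : 0 < tau x 2 := by
  simpa [tau] using hx

theorem tau_tau {x : Fin 3 → ℝ} (hx : 0 < x 2) : tau (tau x) = x := by
  have h := hx.ne'
  ext i
  fin_cases i <;> simp [tau, h]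

/-- Since `tau` is an involution of the half-space, it is a bijection between two subsets of the
half-space as soon as it maps each into the other. -/
theorem bijOn_tau {s t : Set (Fin 3 → ℝ)} (hs : ∀ x ∈ s, 0 < x 2) (ht : ∀ x ∈ t, 0 < x 2)
    (hst : Set.MapsTo tau s t) (hts : Set.MapsTo tau t s) : Set.BijOn tau s t :=
  Set.InvOn.bijOn ⟨fun x hx => tau_tau (hs x hx), fun x hx => tau_tau (ht x hx)⟩ hst hts

/-- `τ(x) = (x₁/x₃, x₂/x₃, 1/x₃)` is an involution of the open upper
half-space `{x₃ > 0}`, mapping the upper hyperboloid `H` bijectively onto the open upper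
unit hemisphere `N` and the positive light cone `L⁺` bijectively onto the open upper
half-cylinder `L⁺_N`. -/
theorem stmt13 :
    (∀ x : Fin 3 → ℝ, 0 < x 2 → 0 < tau x 2 ∧ tau (tau x) = x) ∧
      Set.BijOn tau
        {x : Fin 3 → ℝ | x 0 * x 0 + x 1 * x 1 - x 2 * x 2 = -1 ∧ 0 < x 2}
        {x : Fin 3 → ℝ | x 0 ^ 2 + x 1 ^ 2 + x 2 ^ 2 = 1 ∧ 0 < x 2} ∧
      Set.BijOn tau
        {v : Fin 3 → ℝ | v 0 * v 0 + v 1 * v 1 - v 2 * v 2 = 0 ∧ 0 < v 2}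
        {x : Fin 3 → ℝ | x 0 ^ 2 + x 1 ^ 2 = 1 ∧ 0 < x 2} := by
  refine ⟨fun x hx => ⟨tau_two_pos hx, tau_tau hx⟩,
    bijOn_tau (fun x hx => hx.2) (fun x hx => hx.2) ?_ ?_,
    bijOn_tau (fun x hx => hx.2) (fun x hx => hx.2) ?_ ?_⟩
  all_goals
    rintro x ⟨h, hx⟩
    refine ⟨?_, tau_two_pos hx⟩
    have hx' := hx.ne'
    simp only [tau, Matrix.cons_val]
    field_simp
    linarith
end

section
/- For all x, v ∈ ℝ³ with x₃ > 0 and v₃ > 0, the Minkowski product satisfies ⟨x, v⟩ = −1 if and only if the Euclidean inner product of τ(x) and τ(v) equals 1. Consequently, for every v ∈ L⁺ the image under τ of the horocycle h(v) = {x ∈ H : ⟨x,v⟩ = −1} equals {y ∈ τ(H) : y₁·τ(v)₁ + y₂·τ(v)₂ + y₃·τ(v)₃ = 1}, i.e., horocycles in the hyperboloid model correspond under τ to the sets h_N(w) = {y ∈ N : y·w = 1} with w = τ(v) on the light cylinder. -/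
/-- Dividing `⟨x, v⟩ + 1` by `x 2 * v 2` gives `τ(x) · τ(v) - 1`, so one vanishes exactly when the
other does. -/
theorem mink_eq_neg_one_iff (x v : Fin 3 → ℝ) (hx : 0 < x 2) (hv : 0 < v 2) :
    mink x v = -1 ↔ tau x 0 * tau v 0 + tau x 1 * tau v 1 + tau x 2 * tau v 2 = 1 := by
  have hx' : x 2 ≠ 0 := hx.ne'
  have hv' : v 2 ≠ 0 := hv.ne'
  have key : tau x 0 * tau v 0 + tau x 1 * tau v 1 + tau x 2 * tau v 2 - 1
      = (mink x v + 1) / (x 2 * v 2) := by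
    simp [tau, mink]
    field_simp
    ring
  rw [← sub_eq_zero (b := (1 : ℝ)), key, div_eq_zero_iff, or_iff_left (mul_ne_zero hx' hv'),
    ← eq_neg_iff_add_eq_zero]

/-- For `x, v` with positive third coordinate, `⟨x,v⟩ = −1` iff the
Euclidean inner product of `τ(x)` and `τ(v)` equals `1`. Consequently, for `v ∈ L⁺` the
image under `τ` of the horocycle `h(v) = {x ∈ H : ⟨x,v⟩ = −1}` is
`{y ∈ τ(H) : y·τ(v) = 1}`. -/
theorem stmt14 :
    (∀ x v : Fin 3 → ℝ, 0 < x 2 → 0 < v 2 →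
        (mink x v = -1 ↔ tau x 0 * tau v 0 + tau x 1 * tau v 1 + tau x 2 * tau v 2 = 1)) ∧
      ∀ v : Fin 3 → ℝ, mink v v = 0 → 0 < v 2 →
        tau '' {x | (mink x x = -1 ∧ 0 < x 2) ∧ mink x v = -1} =
          {y ∈ tau '' {x | mink x x = -1 ∧ 0 < x 2} |
            y 0 * tau v 0 + y 1 * tau v 1 + y 2 * tau v 2 = 1} := by
  refine ⟨mink_eq_neg_one_iff, fun v _ hv => ?_⟩
  ext y
  constructor
  · rintro ⟨x, ⟨hx, hxv⟩, rfl⟩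
    exact ⟨⟨x, hx, rfl⟩, (mink_eq_neg_one_iff x v hx.2 hv).1 hxv⟩
  · rintro ⟨⟨x, hx, rfl⟩, hy⟩
    exact ⟨x, ⟨hx, (mink_eq_neg_one_iff x v hx.2 hv).2 hy⟩, rfl⟩
end
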